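/- For complex bodies K, T ⊆ ℂⁿ (unit balls of norms on ℂⁿ, viewed as convex bodies in ℝ^{2n}) and any λ ∈ [0,1], the volume of the logarithmic mean L_λ(K,T) = {x : ⟨x,θ⟩ ≤ h_K(θ)^{1-λ} h_T(θ)^λ for all θ} satisfies |L_λ(K,T)| ≥ |K|^{1-λ} |T|^λ. -/

import Mathlib

open MeasureTheory Set

noncomputable section

/-- A complex body in ℂⁿ ≅ ℝ^{2n}: convex, origin-symmetric, compact, nonempty
interior, and invariant under complex rotations. -/
def IsCxBody {n : ℕ} (K : Set (Fin n → ℂ)) : Prop :=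
  Convex ℝ K ∧ K = -K ∧ IsCompact K ∧ (interior K).Nonempty ∧
    ∀ φ : ℝ, (fun z : Fin n → ℂ => fun j => Complex.exp (φ * Complex.I) * z j) '' K = K

/-- The real inner product Re⟨x, θ⟩ on ℂⁿ ≅ ℝ^{2n}. -/
def crinner {n : ℕ} (x θ : Fin n → ℂ) : ℝ := (∑ j, x j * (starRingEnd ℂ) (θ j)).re

/-- Support function of a set in ℂⁿ, with respect to the real inner product. -/
def csuppFn {n : ℕ} (K : Set (Fin n → ℂ)) (θ : Fin n → ℂ) : ℝ :=
  sSup ((fun x => crinner x θ) '' K)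

/-- Logarithmic mean of two bodies in ℂⁿ. -/
def clogMean {n : ℕ} (l : ℝ) (K T : Set (Fin n → ℂ)) : Set (Fin n → ℂ) :=
  {x | ∀ θ, crinner x θ ≤ csuppFn K θ ^ (1 - l) * csuppFn T θ ^ l}


/-- Wirtinger-type derivative. -/
def Wd {n : ℕ} (a : ℂ) (k : Fin n) (f : (Fin n → ℂ) → ℂ) (x : Fin n → ℂ) : ℂ :=
  (fderiv ℝ f x (Pi.single k 1) + a * fderiv ℝ f x (Pi.single k Complex.I)) / 2

/-- smooth -/
def Sm {n : ℕ} (f : (Fin n → ℂ) → ℂ) : Prop := ContDiff ℝ (⊤ : ℕ∞) f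

section wd
variable {n : ℕ} {a b : ℂ} {k j : Fin n} {f g : (Fin n → ℂ) → ℂ}

lemma Sm.diff (hf : Sm f) : Differentiable ℝ f :=
  ContDiff.differentiable hf (by simp)

lemma Sm.cont (hf : Sm f) : Continuous f := ContDiff.continuous hf

lemma Sm.mul (hf : Sm f) (hg : Sm g) : Sm (fun x => f x * g x) := ContDiff.mul hf hg
lemma Sm.add (hf : Sm f) (hg : Sm g) : Sm (fun x => f x + g x) := ContDiff.add hf hg
lemma Sm.sub (hf : Sm f) (hg : Sm g) : Sm (fun x => f x - g x) := ContDiff.sub hf hg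
lemma Sm.neg (hf : Sm f) : Sm (fun x => - f x) := ContDiff.neg hf
lemma Sm.const (c : ℂ) : Sm (fun _ : Fin n → ℂ => c) := contDiff_const
lemma Sm.sum {ι : Type*} {s : Finset ι} {F : ι → (Fin n → ℂ) → ℂ} (h : ∀ i ∈ s, Sm (F i)) :
    Sm (fun x => ∑ i ∈ s, F i x) := ContDiff.sum h
lemma Sm.conj (hf : Sm f) : Sm (fun x => (starRingEnd ℂ) (f x)) :=
  Complex.conjCLE.contDiff.comp hf
lemma Sm.cexp (hf : Sm f) : Sm (fun x => Complex.exp (f x)) := ContDiff.cexp hf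
lemma Sm.pow (hf : Sm f) (m : ℕ) : Sm (fun x => f x ^ m) := ContDiff.pow hf m

lemma Sm.wd (hf : Sm f) : Sm (Wd a k f) := by
  have h : ContDiff ℝ (⊤ : ℕ∞) (fderiv ℝ f) := ContDiff.fderiv_right hf (by simp)
  unfold Sm Wd
  have h1 : ∀ v, ContDiff ℝ (⊤ : ℕ∞) (fun x => fderiv ℝ f x v) := fun v => h.clm_apply contDiff_const
  exact ((h1 _).add (contDiff_const.mul (h1 _))).div_const _

lemma Wd_mul (hf : Sm f) (hg : Sm g) (x) :
    Wd a k (fun x => f x * g x) x = Wd a k f x * g x + f x * Wd a k g x := by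
  unfold Wd
  rw [fderiv_fun_mul (hf.diff x) (hg.diff x)]
  simp; ring

lemma Wd_add (hf : Sm f) (hg : Sm g) (x) :
    Wd a k (fun x => f x + g x) x = Wd a k f x + Wd a k g x := by
  unfold Wd
  rw [fderiv_fun_add (hf.diff x) (hg.diff x)]
  simp; ring

lemma Wd_sub (hf : Sm f) (hg : Sm g) (x) :
    Wd a k (fun x => f x - g x) x = Wd a k f x - Wd a k g x := by
  unfold Wd
  rw [fderiv_fun_sub (hf.diff x) (hg.diff x)]
  simp; ring

lemma Wd_neg (x) :
    Wd a k (fun x => - f x) x = - Wd a k f x := by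
  unfold Wd
  rw [fderiv_fun_neg]
  simp; ring

lemma Wd_const (c : ℂ) (x) : Wd a k (fun _ => c) x = 0 := by
  simp [Wd]

lemma Wd_sum {ι : Type*} {s : Finset ι} {F : ι → (Fin n → ℂ) → ℂ} (h : ∀ i ∈ s, Sm (F i)) (x) :
    Wd a k (fun x => ∑ i ∈ s, F i x) x = ∑ i ∈ s, Wd a k (F i) x := by
  unfold Wd
  rw [fderiv_fun_sum (fun i hi => (h i hi).diff x)]
  simp [Finset.sum_div, Finset.mul_sum, Finset.sum_add_distrib, add_div]

lemma Wd_conj (hf : Sm f) (x) :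
    Wd a k (fun x => (starRingEnd ℂ) (f x)) x
      = (starRingEnd ℂ) (Wd ((starRingEnd ℂ) a) k f x) := by
  have : fderiv ℝ (fun x => (starRingEnd ℂ) (f x)) x
      = (Complex.conjCLE : ℂ →L[ℝ] ℂ).comp (fderiv ℝ f x) :=
    ((Complex.conjCLE : ℂ →L[ℝ] ℂ).hasFDerivAt.comp x (hf.diff x).hasFDerivAt).fderiv
  unfold Wd
  rw [this]
  have h2 : (starRingEnd ℂ) 2 = 2 := Complex.conj_ofNat 2
  simp [h2]

lemma Wd_cexp (hf : Sm f) (x) :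
    Wd a k (fun x => Complex.exp (f x)) x = Complex.exp (f x) * Wd a k f x := by
  unfold Wd
  rw [(hf.diff x).hasFDerivAt.cexp.fderiv]
  simp; ring

lemma Wd_comm (hf : Sm f) (x) : Wd a k (Wd b j f) x = Wd b j (Wd a k f) x := by
  have h : ContDiff ℝ (⊤ : ℕ∞) (fderiv ℝ f) := ContDiff.fderiv_right hf (by simp)
  have h2 : Differentiable ℝ (fderiv ℝ f) := h.differentiable (by simp)
  have hv : ∀ v, HasFDerivAt (fun x => fderiv ℝ f x v) ((fderiv ℝ (fderiv ℝ f) x).flip v) x := by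
    intro v
    have := (h2 x).hasFDerivAt.clm_apply (hasFDerivAt_const v x)
    simpa using this
  have key : ∀ (b : ℂ) (j : Fin n), fderiv ℝ (Wd b j f) x =
     ((1:ℂ)/2) • ((fderiv ℝ (fderiv ℝ f) x).flip (Pi.single j 1) + b • (fderiv ℝ (fderiv ℝ f) x).flip (Pi.single j Complex.I)) := by
    intro b j
    apply HasFDerivAt.fderiv
    have := ((hv (Pi.single j 1)).add ((hv (Pi.single j Complex.I)).const_mul b)).const_mul ((1:ℂ)/2)
    have e : Wd b j f = fun y => 1 / 2 * ((fderiv ℝ f y) (Pi.single j 1) + b * (fderiv ℝ f y) (Pi.single j Complex.I)) := by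
      ext y; simp only [Wd]; ring
    rw [e]
    exact this
  have hs : ∀ v w, fderiv ℝ (fderiv ℝ f) x v w = fderiv ℝ (fderiv ℝ f) x w v := by
    have : IsSymmSndFDerivAt ℝ f x := by
      have h3 : ContDiffAt ℝ (⊤ : ℕ∞) f x := ContDiff.contDiffAt hf
      apply h3.isSymmSndFDerivAt; simp only [minSmoothness_of_isRCLikeNormedField]; exact WithTop.coe_le_coe.2 le_top
    exact fun v w => this v w
  have e1 : ∀ (a b : ℂ) (k j : Fin n), Wd a k (Wd b j f) x =
     (fderiv ℝ (Wd b j f) x (Pi.single k 1) + a * fderiv ℝ (Wd b j f) x (Pi.single k Complex.I)) / 2 :=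
    fun _ _ _ _ => rfl
  rw [e1, e1, key, key]
  simp only [smul_apply, add_apply, ContinuousLinearMap.flip_apply, smul_eq_mul]
  rw [hs (Pi.single j 1) (Pi.single k 1), hs (Pi.single j 1) (Pi.single k Complex.I), hs (Pi.single j Complex.I) (Pi.single k 1), hs (Pi.single j Complex.I) (Pi.single k Complex.I)]
  ring

lemma HCS.wd (hf : HasCompactSupport f) : HasCompactSupport (Wd a k f) := by
  have h := hf.fderiv (𝕜 := ℝ)
  refine h.mono ?_
  intro x hx
  contrapose! hx
  simp only [Function.mem_support, not_not] at hx ⊢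
  simp [Wd, hx]

lemma Wd_ibp (hf : Sm f) (hg : Sm g) (hc : HasCompactSupport f ∨ HasCompactSupport g) :
    ∫ x, Wd a k f x * g x = - ∫ x, f x * Wd a k g x := by
  -- total derivative of compactly supported product
  have hfg : HasCompactSupport (fun x => f x * g x) := by
    rcases hc with h | h
    · exact h.mul_right
    · exact h.mul_left
  have h0 : ∀ v, ∫ x, fderiv ℝ (fun x => f x * g x) x v = 0 := by
    intro v
    have hs : Sm (fun x => f x * g x) := hf.mul hg
    have hc1 : Continuous (fun x => fderiv ℝ (fun x => f x * g x) x v) :=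
      ((ContDiff.continuous_fderiv hs (by simp)).clm_apply continuous_const)
    have hcs : HasCompactSupport (fun x => fderiv ℝ (fun x => f x * g x) x v) := by
      refine (hfg.fderiv (𝕜 := ℝ)).mono ?_
      intro x hx
      contrapose! hx
      simp only [Function.mem_support, not_not] at hx ⊢
      simp [hx]
    have := integral_mul_fderiv_eq_neg_fderiv_mul_of_integrable (μ := volume) (𝕜 := ℂ)
      (f := fun _ => (1:ℂ)) (g := fun x => f x * g x) (v := v) ?_ ?_ ?_ (fun _ _ => by fun_prop) (fun x _ => hs.diff x)
    · simpa using this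
    · simp only [fderiv_fun_const]; simp
    · simpa using hc1.integrable_of_hasCompactSupport hcs
    · simpa using hs.cont.integrable_of_hasCompactSupport hfg
  have h1 : ∫ x, Wd a k (fun x => f x * g x) x = 0 := by
    unfold Wd
    have hs : Sm (fun x => f x * g x) := hf.mul hg
    have hi : ∀ v, Integrable (fun x => fderiv ℝ (fun x => f x * g x) x v) := by
      intro v
      apply Continuous.integrable_of_hasCompactSupport
      · exact ((ContDiff.continuous_fderiv hs (by simp)).clm_apply continuous_const)
      · refine (hfg.fderiv (𝕜 := ℝ)).mono ?_
        intro x hx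
        contrapose! hx
        simp only [Function.mem_support, not_not] at hx ⊢
        simp [hx]
    rw [integral_div, integral_add (hi _) ((hi _).const_mul _), integral_const_mul, h0, h0]
    simp
  have i1 : Integrable (fun x => Wd a k f x * g x) := by
    apply Continuous.integrable_of_hasCompactSupport (hf.wd.cont.mul hg.cont)
    rcases hc with h | h
    · exact (HCS.wd h).mul_right
    · exact h.mul_left
  have i2 : Integrable (fun x => f x * Wd a k g x) := by
    apply Continuous.integrable_of_hasCompactSupport (hf.cont.mul hg.wd.cont)
    rcases hc with h | h
    · exact h.mul_right
    · exact (HCS.wd h).mul_left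
  simp_rw [Wd_mul hf hg] at h1
  rw [integral_add i1 i2] at h1
  exact eq_neg_of_add_eq_zero_left h1
end wd


/-- the operator -/
def Lam {n : ℕ} (φ g : (Fin n → ℂ) → ℂ) (x : Fin n → ℂ) : ℂ :=
  ∑ k, (Wd Complex.I k (Wd (-Complex.I) k g) x - Wd Complex.I k φ x * Wd (-Complex.I) k g x)

section bochner
variable {n : ℕ} {φ g : (Fin n → ℂ) → ℂ}
local notation "cj" => starRingEnd ℂ
local notation "dz" => Wd (-Complex.I)
local notation "db" => Wd Complex.I

lemma db_weight {h : (Fin n → ℂ) → ℂ} (a : ℂ) (hφ : Sm φ) (hh : Sm h) (k : Fin n) (x) :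
    Wd a k (fun x => h x * Complex.exp (-φ x)) x
      = (Wd a k h x - Wd a k φ x * h x) * Complex.exp (-φ x) := by
  rw [Wd_mul hh hφ.neg.cexp, Wd_cexp hφ.neg, Wd_neg]; ring

lemma Lam_sm (hφ : Sm φ) (hg : Sm g) : Sm (Lam φ g) :=
  Sm.sum fun _ _ => hg.wd.wd.sub (hφ.wd.mul hg.wd)

lemma Lam_cs (hg : HasCompactSupport g) : HasCompactSupport (Lam φ g) := by
  have h : ∀ k : Fin n, HasCompactSupport (fun x => (db k (dz k g) x - db k φ x * dz k g x)) := by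
    intro k
    exact (HCS.wd (HCS.wd hg)).sub ((HCS.wd hg).mul_left)
  have : Lam φ g = ∑ k, fun x => (db k (dz k g) x - db k φ x * dz k g x) := by
    ext x; simp [Lam]
  rw [this]
  have key : ∀ s : Finset (Fin n), HasCompactSupport (∑ k ∈ s, fun x => (db k (dz k g) x - db k φ x * dz k g x)) := by
    intro s
    induction s using Finset.induction_on with
    | empty => simpa using HasCompactSupport.zero
    | insert a s ha ih => rw [Finset.sum_insert ha]; exact (h a).add ih
  exact key _

lemma dz_conj {h : (Fin n → ℂ) → ℂ} (hh : Sm h) (k : Fin n) (x) :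
    dz k (fun x => cj (h x)) x = cj (db k h x) := by
  rw [Wd_conj hh]; simp
lemma db_conj {h : (Fin n → ℂ) → ℂ} (hh : Sm h) (k : Fin n) (x) :
    db k (fun x => cj (h x)) x = cj (dz k h x) := by
  rw [Wd_conj hh]; simp

lemma real_dz (hφ : Sm φ) (hr : ∀ x, cj (φ x) = φ x) (k : Fin n) (x) :
    dz k φ x = cj (db k φ x) := by
  rw [← dz_conj hφ]; congr 1; ext x; exact (hr x).symm

lemma conj_Lam_weight (hφ : Sm φ) (hr : ∀ x, cj (φ x) = φ x) (hg : Sm g) (x) :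
    cj (Lam φ g x) * Complex.exp (-φ x)
      = ∑ k, dz k (fun x => cj (dz k g x) * Complex.exp (-φ x)) x := by
  unfold Lam
  rw [map_sum, Finset.sum_mul]
  refine Finset.sum_congr rfl fun k _ => ?_
  rw [db_weight _ hφ hg.wd.conj, dz_conj hg.wd, real_dz hφ hr]
  simp

/-- pairing with the operator -/
lemma pair_Lam (hφ : Sm φ) (hr : ∀ x, cj (φ x) = φ x) (hg : Sm g) (hgc : HasCompactSupport g)
    {u : (Fin n → ℂ) → ℂ} (hu : Sm u) :
    ∫ x, u x * cj (Lam φ g x) * Complex.exp (-φ x)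
      = - ∑ k, ∫ x, dz k u x * (cj (dz k g x) * Complex.exp (-φ x)) := by
  have hs : ∀ k : Fin n, Sm (fun x => cj (dz k g x) * Complex.exp (-φ x)) :=
    fun k => hg.wd.conj.mul hφ.neg.cexp
  have hcs : ∀ k : Fin n, HasCompactSupport (fun x => cj (dz k g x) * Complex.exp (-φ x)) := by
    intro k
    exact ((HCS.wd hgc).comp_left (g := cj) (map_zero _)).mul_right
  simp_rw [mul_assoc, conj_Lam_weight hφ hr hg, Finset.mul_sum]
  rw [integral_finsetSum, ← Finset.sum_neg_distrib]
  · refine Finset.sum_congr rfl fun k _ => ?_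
    rw [Wd_ibp hu (hs k) (Or.inr (hcs k)), neg_neg]
  · intro k _
    exact (hu.cont.mul (hs k).wd.cont).integrable_of_hasCompactSupport ((HCS.wd (hcs k)).mul_left)

lemma bochner (hφ : Sm φ) (hr : ∀ x, cj (φ x) = φ x) (hg : Sm g) (hgc : HasCompactSupport g) :
    ∫ x, Lam φ g x * cj (Lam φ g x) * Complex.exp (-φ x)
      = ∑ j, ∑ k, ((∫ x, dz j (dz k g) x * cj (dz j (dz k g) x) * Complex.exp (-φ x))
        + ∫ x, dz j (db k φ) x * dz k g x * (cj (dz j g x) * Complex.exp (-φ x))) := by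
  have hcs : ∀ k : Fin n, HasCompactSupport (fun x => cj (dz k g x) * Complex.exp (-φ x)) := by
    intro k
    exact ((HCS.wd hgc).comp_left (g := cj) (map_zero _)).mul_right
  have hs : ∀ k : Fin n, Sm (fun x => cj (dz k g x) * Complex.exp (-φ x)) :=
    fun k => hg.wd.conj.mul hφ.neg.cexp
  rw [pair_Lam hφ hr hg hgc (Lam_sm hφ hg), ← Finset.sum_neg_distrib]
  refine Finset.sum_congr rfl fun j _ => ?_
  have e : ∀ x, dz j (Lam φ g) x = ∑ k, ((db k (dz j (dz k g)) x - db k φ x * dz j (dz k g) x)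
      - dz j (db k φ) x * dz k g x) := by
    intro x
    unfold Lam
    rw [Wd_sum (fun k _ => hg.wd.wd.sub (hφ.wd.mul hg.wd))]
    refine Finset.sum_congr rfl fun k _ => ?_
    rw [Wd_sub hg.wd.wd (hφ.wd.mul hg.wd), Wd_mul hφ.wd hg.wd, Wd_comm hg.wd]
    ring
  simp_rw [e, Finset.sum_mul]
  rw [integral_finsetSum, ← Finset.sum_neg_distrib]
  · refine Finset.sum_congr rfl fun k _ => ?_
    have e2 : ∀ x, ((db k (dz j (dz k g)) x - db k φ x * dz j (dz k g) x)
      - dz j (db k φ) x * dz k g x) * (cj (dz j g x) * Complex.exp (-φ x))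
      = db k (fun x => dz j (dz k g) x * Complex.exp (-φ x)) x * cj (dz j g x)
        - dz j (db k φ) x * dz k g x * (cj (dz j g x) * Complex.exp (-φ x)) := by
      intro x
      rw [db_weight _ hφ hg.wd.wd]; ring
    simp_rw [e2]
    have hcg : HasCompactSupport (fun x => cj (dz j g x)) := (HCS.wd hgc).comp_left (g := cj) (map_zero _)
    rw [integral_sub, Wd_ibp (hg.wd.wd.mul hφ.neg.cexp) hg.wd.conj (Or.inr hcg)]
    · have e3 : ∀ x, dz j (dz k g) x * Complex.exp (-φ x) * db k (fun x => cj (dz j g x)) x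
          = dz j (dz k g) x * cj (dz j (dz k g) x) * Complex.exp (-φ x) := by
        intro x
        rw [db_conj hg.wd, Wd_comm hg]; ring
      simp_rw [e3]; ring
    · exact ((hg.wd.wd.mul hφ.neg.cexp).wd.cont.mul hg.wd.conj.cont).integrable_of_hasCompactSupport hcg.mul_left
    · exact ((hφ.wd.wd.mul hg.wd).cont.mul (hs j).cont).integrable_of_hasCompactSupport (hcs j).mul_left
  · intro k _
    refine (((hg.wd.wd.wd.sub (hφ.wd.mul hg.wd.wd)).sub (hφ.wd.wd.mul hg.wd)).cont.mul (hs j).cont).integrable_of_hasCompactSupport (hcs j).mul_left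

/-- sum of squares -/
def sosq {n : ℕ} {ι : Type*} [Fintype ι] (F : ι → (Fin n → ℂ) → ℂ) (x : Fin n → ℂ) : ℂ :=
  ∑ i, F i x * (starRingEnd ℂ) (F i x)

/-- weighted sum of squares -/
def wsosq {n : ℕ} {ι : Type*} [Fintype ι] (b : ι → ℝ) (F : ι → (Fin n → ℂ) → ℂ) (x : Fin n → ℂ) : ℂ :=
  ∑ i, (b i : ℂ) * (F i x * (starRingEnd ℂ) (F i x))

variable {ι : Type*} [Fintype ι] {F : ι → (Fin n → ℂ) → ℂ}

lemma sosq_sm (hF : ∀ i, Sm (F i)) : Sm (sosq F) := Sm.sum fun i _ => (hF i).mul (hF i).conj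
lemma wsosq_sm (b : ι → ℝ) (hF : ∀ i, Sm (F i)) : Sm (wsosq b F) :=
  Sm.sum fun i _ => (Sm.const _).mul ((hF i).mul (hF i).conj)

lemma sosq_eq (x) : sosq F x = ((∑ i, ‖F i x‖ ^ 2 : ℝ) : ℂ) := by
  simp [sosq, Complex.mul_conj']
lemma wsosq_eq (b : ι → ℝ) (x) : wsosq b F x = ((∑ i, b i * ‖F i x‖ ^ 2 : ℝ) : ℂ) := by
  simp [wsosq, Complex.mul_conj']
lemma sosq_real (x) : cj (sosq F x) = sosq F x := by rw [sosq_eq, Complex.conj_ofReal]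

lemma db_sosq (hF : ∀ i, Sm (F i)) (hh : ∀ i k x, db k (F i) x = 0) (k : Fin n) :
    db k (sosq F) = fun x => ∑ i, F i x * cj (dz k (F i) x) := by
  ext x
  unfold sosq
  rw [Wd_sum fun i _ => (hF i).mul (hF i).conj]
  refine Finset.sum_congr rfl fun i _ => ?_
  rw [Wd_mul (hF i) (hF i).conj, hh, db_conj (hF i)]; ring

lemma dz_db_sosq (hF : ∀ i, Sm (F i)) (hh : ∀ i k x, db k (F i) x = 0) (j k : Fin n) (x) :
    dz j (db k (sosq F)) x = ∑ i, dz j (F i) x * cj (dz k (F i) x) := by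
  rw [db_sosq hF hh, Wd_sum fun i _ => (hF i).mul (hF i).wd.conj]
  refine Finset.sum_congr rfl fun i _ => ?_
  rw [Wd_mul (hF i) (hF i).wd.conj, dz_conj (hF i).wd, Wd_comm (hF i)]
  have : db j (F i) = fun _ => 0 := by ext x; exact hh i j x
  rw [this, Wd_const]; simp

lemma dz_wsosq (b : ι → ℝ) (hF : ∀ i, Sm (F i)) (hh : ∀ i k x, db k (F i) x = 0) (k : Fin n) (x) :
    dz k (wsosq b F) x = ∑ i, b i * (dz k (F i) x * cj (F i x)) := by
  unfold wsosq
  rw [Wd_sum fun i _ => (Sm.const _).mul ((hF i).mul (hF i).conj)]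
  refine Finset.sum_congr rfl fun i _ => ?_
  rw [Wd_mul (Sm.const _) ((hF i).mul (hF i).conj), Wd_const, Wd_mul (hF i) (hF i).conj, dz_conj (hF i), hh]
  simp

/-- the key inequality -/
lemma key_ineq (b : ι → ℝ) (hF : ∀ i, Sm (F i)) (hh : ∀ i k x, db k (F i) x = 0)
    (hg : Sm g) (hgc : HasCompactSupport g) (m : ℂ)
    (hint : Integrable (fun x => (∑ i, b i ^ 2 * ‖F i x‖ ^ 2) * Real.exp (-(∑ i, ‖F i x‖ ^ 2)))) :
    2 * (∫ x, (wsosq b F x - m) * cj (Lam (sosq F) g x) * Complex.exp (-sosq F x)).re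
      ≤ (∫ x, (∑ i, b i ^ 2 * ‖F i x‖ ^ 2) * Real.exp (-(∑ i, ‖F i x‖ ^ 2)))
        + ∫ x, ‖Lam (sosq F) g x‖ ^ 2 * Real.exp (-(∑ i, ‖F i x‖ ^ 2)) := by
  have hφ := sosq_sm hF
  have hr := sosq_real (F := F)
  set E : (Fin n → ℂ) → ℝ := fun x => Real.exp (-(∑ i, ‖F i x‖ ^ 2)) with hE
  have hEc : ∀ x, Complex.exp (-sosq F x) = (E x : ℂ) := by
    intro x; rw [sosq_eq, hE]; push_cast; rfl
  have hEcont : Continuous E := by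
    have := fun i => (hF i).cont
    rw [hE]; fun_prop
  set G : ι → (Fin n → ℂ) → ℂ := fun i x => ∑ k, cj (dz k (F i) x) * dz k g x with hG
  have hGc : ∀ i, Continuous (G i) := fun i => continuous_finsetSum _ fun k _ => ((hF i).wd.conj.mul hg.wd).cont
  have hGs : ∀ i, HasCompactSupport (G i) := by
    intro i
    have : G i = fun x => ∑ k, cj (dz k (F i) x) * dz k g x := rfl
    refine HasCompactSupport.intro (K := tsupport g) hgc ?_
    intro x hx
    have : ∀ k : Fin n, dz k g x = 0 := by
      intro k
      simp [Wd, fderiv_of_notMem_tsupport (𝕜 := ℝ) hx]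
    simp [hG, this]
  -- bochner
  have h1 : (∫ x, ∑ i, ‖G i x‖ ^ 2 * E x) ≤ ∫ x, ‖Lam (sosq F) g x‖ ^ 2 * E x := by
    have hb := bochner hφ hr hg hgc
    have l1 : ∫ x, Lam (sosq F) g x * cj (Lam (sosq F) g x) * Complex.exp (-sosq F x)
        = ((∫ x, ‖Lam (sosq F) g x‖ ^ 2 * E x : ℝ) : ℂ) := by
      rw [← integral_complex_ofReal]
      congr 1; ext x; rw [Complex.mul_conj', hEc]; push_cast; rfl
    have l2 : ∀ j k : Fin n, ∫ x, dz j (dz k g) x * cj (dz j (dz k g) x) * Complex.exp (-sosq F x)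
        = ((∫ x, ‖dz j (dz k g) x‖ ^ 2 * E x : ℝ) : ℂ) := by
      intro j k
      rw [← integral_complex_ofReal]
      congr 1; ext x; rw [Complex.mul_conj', hEc]; push_cast; rfl
    have l3 : ∑ j, ∑ k, ∫ x, dz j (db k (sosq F)) x * dz k g x * (cj (dz j g x) * Complex.exp (-sosq F x))
       = ((∫ x, ∑ i, ‖G i x‖ ^ 2 * E x : ℝ) : ℂ) := by
      have hI : ∀ j k : Fin n, Integrable (fun x => dz j (db k (sosq F)) x * dz k g x * (cj (dz j g x) * Complex.exp (-sosq F x))) := by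
        intro j k
        refine ((hφ.wd.wd.mul hg.wd).mul (hg.wd.conj.mul hφ.neg.cexp)).cont.integrable_of_hasCompactSupport ?_
        exact ((HCS.wd hgc).mul_left).mul_right
      rw [← integral_complex_ofReal]
      rw [Finset.sum_congr rfl fun j _ => (integral_finsetSum _ fun k _ => hI j k).symm]
      rw [← integral_finsetSum _ fun j _ => integrable_finsetSum _ fun k _ => hI j k]
      congr 1; ext x
      push_cast
      simp_rw [dz_db_sosq hF hh, hEc, ← Complex.mul_conj', hG, map_sum, Finset.sum_mul, Finset.mul_sum, Finset.sum_mul]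
      rw [Finset.sum_congr rfl fun j _ => Finset.sum_comm]
      rw [Finset.sum_comm]
      refine Finset.sum_congr rfl fun i _ => ?_
      rw [Finset.sum_comm]
      refine Finset.sum_congr rfl fun k _ => ?_
      refine Finset.sum_congr rfl fun j _ => ?_
      simp; ring
    simp_rw [Finset.sum_add_distrib] at hb
    rw [l1, l3] at hb
    simp_rw [l2] at hb
    have hb' : (∫ x, ‖Lam (sosq F) g x‖ ^ 2 * E x) = (∑ j : Fin n, ∑ k : Fin n, ∫ x, ‖dz j (dz k g) x‖ ^ 2 * E x)
       + ∫ x, ∑ i, ‖G i x‖ ^ 2 * E x := by exact_mod_cast hb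
    rw [hb']
    have : 0 ≤ (∑ j : Fin n, ∑ k : Fin n, ∫ x, ‖dz j (dz k g) x‖ ^ 2 * E x) :=
      Finset.sum_nonneg fun j _ => Finset.sum_nonneg fun k _ => integral_nonneg fun x => by
        simp only [hE]; positivity
    linarith
  -- pairing
  have hus : Sm (fun x => wsosq b F x - m) := (wsosq_sm b hF).sub (Sm.const m)
  have h2 : ∫ x, (wsosq b F x - m) * cj (Lam (sosq F) g x) * Complex.exp (-sosq F x)
      = ∫ x, -(∑ i, b i * (cj (F i x) * cj (G i x))) * E x := by
    rw [pair_Lam hφ hr hg hgc hus, ← integral_finsetSum, ← integral_neg]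
    · congr 1; ext x
      have : ∀ k : Fin n, dz k (fun x => wsosq b F x - m) x = dz k (wsosq b F) x := by
        intro k; rw [Wd_sub (wsosq_sm b hF) (Sm.const m), Wd_const, sub_zero]
      simp_rw [this, dz_wsosq b hF hh, hEc, hG, map_sum, Finset.sum_mul, Finset.mul_sum]
      rw [neg_mul, Finset.sum_mul]
      congr 1
      rw [Finset.sum_comm]
      refine Finset.sum_congr rfl fun i _ => ?_
      rw [Finset.sum_mul]
      refine Finset.sum_congr rfl fun k _ => ?_
      simp; ring
    · intro k _
      refine (hus.wd.cont.mul (hg.wd.conj.mul hφ.neg.cexp).cont).integrable_of_hasCompactSupport ?_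
      exact (((HCS.wd hgc).comp_left (g := cj) (map_zero _)).mul_right).mul_left
  have hIG : Integrable (fun x => ∑ i, ‖G i x‖ ^ 2 * E x) := by
    apply integrable_finsetSum
    intro i _
    apply Continuous.integrable_of_hasCompactSupport (by have := hGc i; fun_prop)
    have := (hGs i).comp_left (g := fun z : ℂ => ‖z‖ ^ 2) (by simp)
    exact this.mul_right
  have hI2 : Integrable (fun x => -(∑ i, (b i : ℂ) * (cj (F i x) * cj (G i x))) * (E x : ℂ)) := by
    have : ∀ i, Continuous (F i) := fun i => (hF i).cont
    have hcc : Continuous fun z : ℂ => cj z := Complex.continuous_conj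
    apply Continuous.integrable_of_hasCompactSupport
    · refine Continuous.mul (Continuous.neg (continuous_finsetSum _ fun i _ => ?_)) (by fun_prop)
      exact continuous_const.mul ((hcc.comp (this i)).mul (hcc.comp (hGc i)))
    · refine HasCompactSupport.intro (K := tsupport g) hgc ?_
      intro x hx
      have : ∀ k : Fin n, dz k g x = 0 := by
        intro k
        simp [Wd, fderiv_of_notMem_tsupport (𝕜 := ℝ) hx]
      simp [hG, this]
  rw [h2]
  have hre : (∫ x, -(∑ i, (b i : ℂ) * (cj (F i x) * cj (G i x))) * (E x : ℂ)).re
      = ∫ x, (-(∑ i, (b i : ℂ) * (cj (F i x) * cj (G i x))) * (E x : ℂ)).re := by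
    have := integral_re hI2
    simpa using this.symm
  rw [hre, ← integral_const_mul]
  refine le_trans ?_ (add_le_add le_rfl h1)
  rw [← integral_add hint hIG]
  have hI3 := hI2.re
  refine integral_mono (hI3.const_mul 2) (hint.add hIG) ?_
  intro x
  have hEp : 0 < E x := Real.exp_pos _
  have : (-(∑ i, (b i : ℂ) * (cj (F i x) * cj (G i x))) * (E x : ℂ)).re
      = (∑ i, (-((b i : ℂ) * (cj (F i x) * cj (G i x)))).re) * E x := by
    rw [Complex.re_mul_ofReal, ← Finset.sum_neg_distrib, Complex.re_sum]
  simp only [RCLike.re_to_complex]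
  rw [this, ← Finset.sum_mul, ← add_mul, ← mul_assoc]
  refine mul_le_mul_of_nonneg_right ?_ hEp.le
  rw [Finset.mul_sum, ← Finset.sum_add_distrib]
  refine Finset.sum_le_sum fun i _ => ?_
  have h3 : (-((b i : ℂ) * (cj (F i x) * cj (G i x)))).re ≤ |b i| * ‖F i x‖ * ‖G i x‖ := by
    refine (Complex.re_le_norm _).trans (le_of_eq ?_)
    simp [mul_assoc]
  have h4 := sq_nonneg (|b i| * ‖F i x‖ - ‖G i x‖)
  have h5 : |b i| ^ 2 = b i ^ 2 := sq_abs _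
  nlinarith
end bochner


/-- mollifiers -/
structure Moll {n : ℕ} (ε : ℝ) (ρ : (Fin n → ℂ) → ℝ) : Prop where
  sm : Sm (fun x => (ρ x : ℂ))
  nn : ∀ x, 0 ≤ ρ x
  supp : ∀ x, ε ≤ ‖x‖ → ρ x = 0
  cs : HasCompactSupport ρ
  int : ∫ x, ρ x = 1

lemma exists_moll {n : ℕ} (ε : ℝ) (hε : 0 < ε) : ∃ ρ : (Fin n → ℂ) → ℝ, Moll ε ρ := by
  let f : ContDiffBump (0 : Fin n → ℂ) := ⟨ε / 2, ε, by linarith, by linarith⟩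
  refine ⟨f.normed volume, ?_, fun x => f.nonneg_normed x, ?_, f.hasCompactSupport_normed, f.integral_normed⟩
  · exact Complex.ofRealCLM.contDiff.comp (f.contDiff_normed (n := ⊤))
  · intro x hx
    have : x ∉ Function.support (f.normed volume) := by
      rw [f.support_normed_eq]; simp [f, hx]
    simpa using this

lemma Moll.cont {n : ℕ} {ε : ℝ} {ρ : (Fin n → ℂ) → ℝ} (h : Moll ε ρ) : Continuous ρ := by
  have := Complex.continuous_re.comp h.sm.cont
  simpa [Function.comp_def] using this

lemma Moll.csc {n : ℕ} {ε : ℝ} {ρ : (Fin n → ℂ) → ℝ} (h : Moll ε ρ) :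
    HasCompactSupport (fun x => (ρ x : ℂ)) := h.cs.comp_left (g := fun t : ℝ => (t : ℂ)) (by simp)

lemma Moll.integrable {n : ℕ} {ε : ℝ} {ρ : (Fin n → ℂ) → ℝ} (h : Moll ε ρ) : Integrable ρ :=
  h.cont.integrable_of_hasCompactSupport h.cs

/-- convolution -/
def cv {n : ℕ} (V σ : (Fin n → ℂ) → ℂ) : (Fin n → ℂ) → ℂ :=
  convolution V σ (ContinuousLinearMap.mul ℝ ℂ) volume

section
variable {n : ℕ} {V σ : (Fin n → ℂ) → ℂ}

lemma cv_apply (x) : cv V σ x = ∫ y, V y * σ (x - y) := rfl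

lemma cv_int (hV : LocallyIntegrable V) (hσ : Continuous σ) (hc : HasCompactSupport σ) (x) :
    Integrable (fun y => V y * σ (x - y)) :=
  hc.convolutionExists_right (ContinuousLinearMap.mul ℝ ℂ) hV hσ x

lemma cv_sm (hV : LocallyIntegrable V) (hσ : Sm σ) (hc : HasCompactSupport σ) : Sm (cv V σ) :=
  hc.contDiff_convolution_right (ContinuousLinearMap.mul ℝ ℂ) hV hσ

lemma Wd_cv (a : ℂ) (k : Fin n) (hV : LocallyIntegrable V) (hσ : Sm σ) (hc : HasCompactSupport σ) (x) :
    Wd a k (cv V σ) x = cv V (Wd a k σ) x := by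
  have h := hc.hasFDerivAt_convolution_right (ContinuousLinearMap.mul ℝ ℂ) hV
    (ContDiff.of_le hσ (by exact_mod_cast le_top)) x
  have hcs := hc.fderiv (𝕜 := ℝ)
  have hcont : Continuous (fderiv ℝ σ) := ContDiff.continuous_fderiv hσ (by simp)
  have hex := hcs.convolutionExists_right ((ContinuousLinearMap.mul ℝ ℂ).precompR (Fin n → ℂ)) hV hcont x
  have e : ∀ v, fderiv ℝ (cv V σ) x v = ∫ y, V y * fderiv ℝ σ (x - y) v := by
    intro v
    have : fderiv ℝ (cv V σ) x = _ := h.fderiv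
    rw [this, convolution_def, ContinuousLinearMap.integral_apply hex.integrable]
    rfl
  have hi : ∀ v, Integrable (fun y => V y * fderiv ℝ σ (x - y) v) := by
    intro v
    refine cv_int (σ := fun z => fderiv ℝ σ z v) hV (hcont.clm_apply continuous_const) ?_ x
    refine hcs.mono ?_
    intro x hx
    contrapose! hx
    simp only [Function.mem_support, not_not] at hx ⊢
    simp [hx]
  rw [cv_apply]
  unfold Wd
  rw [e, e, ← integral_const_mul, ← integral_add (hi _) ((hi _).const_mul a), ← integral_div]
  congr 1; ext y; ring

lemma cv_tendsto (hV : LocallyIntegrable V) {ψ : (Fin n → ℂ) → ℂ} (hψ : Continuous ψ)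
    (hc : HasCompactSupport ψ) {τ : ℝ} (hτ : 0 < τ) :
    ∃ ε₀ > 0, ∀ ε ≤ ε₀, ∀ ρ : (Fin n → ℂ) → ℝ, Moll ε ρ →
      ‖(∫ x, cv V (fun x => (ρ x : ℂ)) x * ψ x) - ∫ x, V x * ψ x‖ ≤ τ := by
  set ψ' : (Fin n → ℂ) → ℂ := fun x => ψ (-x)
  have hψ' : Continuous ψ' := hψ.comp continuous_neg
  have hc' : HasCompactSupport ψ' := hc.comp_homeomorph (Homeomorph.neg _)
  set H := cv ψ' V with hH
  have hHc : Continuous H := hc'.continuous_convolution_left _ hψ' hV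
  have hH0 : H 0 = ∫ x, V x * ψ x := by
    rw [hH, cv_apply, ← integral_neg_eq_self]
    congr 1; ext x; simp [ψ', mul_comm]
  have hVn : LocallyIntegrable (fun x => ‖V x‖) := fun x => by
    obtain ⟨s, hs, hi⟩ := hV x
    exact ⟨s, hs, hi.norm⟩
  obtain ⟨ε₀, h0, hε₀⟩ := Metric.continuous_iff.1 hHc 0 τ hτ
  refine ⟨ε₀, h0, fun ε hε ρ hρ => ?_⟩
  have key : ∫ x, cv V (fun x => (ρ x : ℂ)) x * ψ x = ∫ x, H x * ρ (-x) := by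
    have h1 : cv (cv ψ' V) (fun x => (ρ x : ℂ)) 0 = cv ψ' (cv V (fun x => (ρ x : ℂ))) 0 := by
      refine convolution_assoc _ _ _ _ (fun x y z => by simp [mul_assoc]) hψ'.aestronglyMeasurable
        hV.aestronglyMeasurable hρ.sm.cont.aestronglyMeasurable ?_ ?_ ?_
      · exact Filter.Eventually.of_forall (hc'.convolutionExists_left _ hψ' hV)
      · exact Filter.Eventually.of_forall (hρ.csc.norm.convolutionExists_right _ hVn hρ.sm.cont.norm)
      · refine hc'.norm.convolutionExists_left _ hψ'.norm ?_ 0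
        exact (hρ.csc.norm.continuous_convolution_right _ hVn hρ.sm.cont.norm).locallyIntegrable
    rw [cv_apply, cv_apply] at h1
    simp only [zero_sub] at h1
    rw [hH, h1, ← integral_neg_eq_self]
    congr 1; ext x; simp [ψ', mul_comm]
  have hρi : Integrable (fun x => ρ (-x)) := hρ.integrable.comp_neg
  have hρ1 : ∫ x, ρ (-x) = 1 := by rw [integral_neg_eq_self]; exact hρ.int
  have hHi : Integrable (fun x => H x * ρ (-x)) := by
    have : Continuous (fun x => (ρ (-x) : ℂ)) := hρ.sm.cont.comp continuous_neg
    exact (hHc.mul this).integrable_of_hasCompactSupport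
      ((hρ.csc.comp_homeomorph (Homeomorph.neg _)).mul_left)
  have h2 : H 0 = ∫ x, H 0 * ρ (-x) := by
    rw [integral_const_mul, integral_complex_ofReal, hρ1]; simp
  have hI2 : Integrable (fun x => H 0 * (ρ (-x) : ℂ)) := (hρi.ofReal (𝕜 := ℂ)).const_mul _
  rw [key, ← hH0, h2, ← integral_sub hHi hI2]
  calc _ ≤ ∫ x, τ * ρ (-x) := by
        refine norm_integral_le_of_norm_le (hρi.const_mul τ) (Filter.Eventually.of_forall fun x => ?_)
        rw [← sub_mul, norm_mul, Complex.norm_real, Real.norm_of_nonneg (hρ.nn _)]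
        by_cases hx : ε ≤ ‖x‖
        · rw [hρ.supp (-x) (by simpa using hx)]; simp
        · refine mul_le_mul_of_nonneg_right ?_ (hρ.nn _)
          have := hε₀ x (by simp; linarith)
          rw [dist_eq_norm] at this
          exact this.le
    _ = τ := by rw [integral_const_mul, hρ1, mul_one]

/-- Jensen-type estimate -/
lemma cv_jensen {ε : ℝ} {ρ : (Fin n → ℂ) → ℝ} (hρ : Moll ε ρ) (hV : LocallyIntegrable V)
    {φ : (Fin n → ℂ) → ℝ}
    (x : Fin n → ℂ) {s : (Fin n → ℂ) → ℂ} {δ : ℝ}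
    (hQx : Integrable (fun y => Real.exp (φ y) * ‖V y‖ ^ 2 * ρ (x - y)))
    (hx : ∀ y, ‖x - y‖ < ε → φ x ≤ φ y + Real.log 2) (hs : ∀ y, ‖x - y‖ < ε → ‖s y‖ ≤ δ) :
    Real.exp (φ x) * ‖∫ y, V y * s y * ρ (x - y)‖ ^ 2
      ≤ 2 * δ ^ 2 * ∫ y, Real.exp (φ y) * ‖V y‖ ^ 2 * ρ (x - y) := by
  have hV1 : Integrable (fun y => ‖V y‖ * ρ (x - y)) := by
    have := (cv_int hV hρ.sm.cont hρ.csc x).norm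
    refine this.congr (Filter.Eventually.of_forall fun y => ?_)
    simp [abs_of_nonneg (hρ.nn _)]
  have hρx : Integrable (fun y => ρ (x - y)) := hρ.integrable.comp_sub_left x
  have hρ1 : ∫ y, ρ (x - y) = 1 := by rw [integral_sub_left_eq_self]; exact hρ.int
  set c := ∫ y, ‖V y‖ * ρ (x - y) with hc
  have hc0 : 0 ≤ c := integral_nonneg fun y => mul_nonneg (norm_nonneg _) (hρ.nn _)
  have h1 : ‖∫ y, V y * s y * ρ (x - y)‖ ≤ δ * c := by
    rw [hc, ← integral_const_mul]
    refine norm_integral_le_of_norm_le (hV1.const_mul δ) (Filter.Eventually.of_forall fun y => ?_)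
    rw [norm_mul, norm_mul, Complex.norm_real, Real.norm_of_nonneg (hρ.nn _)]
    by_cases hy : ‖x - y‖ < ε
    · have := hs y hy
      have h3 : 0 ≤ ‖V y‖ * ρ (x - y) := mul_nonneg (norm_nonneg _) (hρ.nn _)
      nlinarith
    · rw [hρ.supp _ (not_lt.1 hy)]; simp
  -- Jensen
  have h2 : Real.exp (φ x) * c ^ 2 ≤ 2 * ∫ y, Real.exp (φ y) * ‖V y‖ ^ 2 * ρ (x - y) := by
    have : ∫ y, (2 * c * Real.exp (φ x) * (‖V y‖ * ρ (x - y)) - c ^ 2 * Real.exp (φ x) * ρ (x - y))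
        ≤ ∫ y, 2 * (Real.exp (φ y) * ‖V y‖ ^ 2 * ρ (x - y)) := by
      refine integral_mono ((hV1.const_mul _).sub (hρx.const_mul _)) (hQx.const_mul 2) fun y => ?_
      show 2 * c * Real.exp (φ x) * (‖V y‖ * ρ (x - y)) - c ^ 2 * Real.exp (φ x) * ρ (x - y)
        ≤ 2 * (Real.exp (φ y) * ‖V y‖ ^ 2 * ρ (x - y))
      by_cases hy : ‖x - y‖ < ε
      · have he : Real.exp (φ x) ≤ 2 * Real.exp (φ y) := by
          calc Real.exp (φ x) ≤ Real.exp (φ y + Real.log 2) := Real.exp_le_exp.2 (hx y hy)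
            _ = _ := by rw [Real.exp_add, Real.exp_log (by norm_num)]; ring
        have h3 : 2 * c * Real.exp (φ x) * ‖V y‖ - c ^ 2 * Real.exp (φ x) ≤ 2 * (Real.exp (φ y) * ‖V y‖ ^ 2) := by
          have h4 := mul_nonneg (Real.exp_pos (φ x)).le (sq_nonneg (c - ‖V y‖))
          have h5 := mul_le_mul_of_nonneg_right he (sq_nonneg ‖V y‖)
          nlinarith
        have := mul_le_mul_of_nonneg_right h3 (hρ.nn (x - y))
        nlinarith
      · rw [hρ.supp _ (not_lt.1 hy)]; simp
    rw [integral_sub (hV1.const_mul _) (hρx.const_mul _), integral_const_mul, integral_const_mul,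
      integral_const_mul, hρ1, ← hc] at this
    nlinarith
  calc _ ≤ Real.exp (φ x) * (δ * c) ^ 2 := by gcongr
    _ = δ ^ 2 * (Real.exp (φ x) * c ^ 2) := by ring
    _ ≤ δ ^ 2 * (2 * ∫ y, Real.exp (φ y) * ‖V y‖ ^ 2 * ρ (x - y)) := by gcongr
    _ = _ := by ring
end


/-- cutoffs -/
structure Cut {n : ℕ} (C R : ℝ) (χ : (Fin n → ℂ) → ℝ) : Prop where
  sm : Sm (fun x => (χ x : ℂ))
  nn : ∀ x, 0 ≤ χ x
  le_one : ∀ x, χ x ≤ 1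
  cs : HasCompactSupport χ
  one : ∀ x, ∑ j, ‖x j‖ ^ 2 ≤ R ^ 2 → χ x = 1
  inv : ∀ (c : ℂ) x, ‖c‖ = 1 → χ (c • x) = χ x
  grad : ∀ k x, ‖Wd (-Complex.I) k (fun x => (χ x : ℂ)) x‖ ≤ C / R

lemma exists_cut (n : ℕ) : ∃ C : ℝ, 0 ≤ C ∧ ∀ R : ℝ, 0 < R → ∃ χ : (Fin n → ℂ) → ℝ, Cut C R χ := by
  set f : (Fin n → ℂ) → ℝ := fun x => Real.smoothTransition (2 - ∑ j, ‖x j‖ ^ 2) with hf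
  have hsmr : ContDiff ℝ (⊤ : ℕ∞) f := by
    refine Real.smoothTransition.contDiff.comp ?_
    refine contDiff_const.sub (ContDiff.sum fun j _ => ?_)
    exact (contDiff_apply ℝ ℂ j).norm_sq ℝ
  have hsm : Sm (fun x => (f x : ℂ)) := Complex.ofRealCLM.contDiff.comp hsmr
  have hcs : HasCompactSupport f := by
    refine HasCompactSupport.of_support_subset_isCompact (isCompact_closedBall (0 : Fin n → ℂ) 2) ?_
    intro x hx
    rw [mem_closedBall_zero_iff]
    by_contra h
    apply hx
    rw [not_le] at h
    apply Real.smoothTransition.zero_of_nonpos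
    obtain ⟨j, hj⟩ : ∃ j, 2 < ‖x j‖ := by
      by_contra! hh
      exact absurd ((pi_norm_le_iff_of_nonneg (by norm_num)).2 hh) (not_le.2 h)
    have : ‖x j‖ ^ 2 ≤ ∑ j, ‖x j‖ ^ 2 :=
      Finset.single_le_sum (f := fun j => ‖x j‖ ^ 2) (fun j _ => sq_nonneg _) (Finset.mem_univ j)
    nlinarith
  have hcsc : HasCompactSupport (fun x => (f x : ℂ)) := hcs.comp_left (g := fun t : ℝ => (t : ℂ)) (by simp)
  have hb : ∀ k : Fin n, ∃ C, ∀ x, ‖Wd (-Complex.I) k (fun x => (f x : ℂ)) x‖ ≤ C := fun k =>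
    (HCS.wd hcsc).exists_bound_of_continuous hsm.wd.cont
  choose C hC using hb
  refine ⟨∑ k, |C k|, Finset.sum_nonneg fun _ _ => abs_nonneg _, fun R hR => ?_⟩
  have hR' : R ≠ 0 := hR.ne'
  refine ⟨fun x => f (R⁻¹ • x), ?_, ?_, ?_, ?_, ?_, ?_, ?_⟩
  · exact ContDiff.comp (g := fun x => (f x : ℂ)) hsm (contDiff_const_smul R⁻¹)
  · exact fun x => Real.smoothTransition.nonneg _
  · exact fun x => Real.smoothTransition.le_one _
  · exact hcs.comp_smul (inv_ne_zero hR')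
  · intro x hx
    apply Real.smoothTransition.one_of_one_le
    have : ∑ j, ‖(R⁻¹ • x) j‖ ^ 2 = (R ^ 2)⁻¹ * ∑ j, ‖x j‖ ^ 2 := by
      rw [Finset.mul_sum]; refine Finset.sum_congr rfl fun j _ => ?_
      simp [abs_of_pos hR, mul_pow]
    rw [this]
    have h2 : (R ^ 2)⁻¹ * ∑ j, ‖x j‖ ^ 2 ≤ (R ^ 2)⁻¹ * R ^ 2 := by gcongr
    rw [inv_mul_cancel₀ (by positivity)] at h2
    linarith
  · intro c x hc
    simp [f, hc]
  · intro k x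
    have : Wd (-Complex.I) k (fun x => (f (R⁻¹ • x) : ℂ)) x
        = (R⁻¹ : ℂ) * Wd (-Complex.I) k (fun x => (f x : ℂ)) (R⁻¹ • x) := by
      have e : ∀ v, fderiv ℝ (fun x => (f (R⁻¹ • x) : ℂ)) x v
          = (R⁻¹ : ℂ) * fderiv ℝ (fun x => (f x : ℂ)) (R⁻¹ • x) v := by
        intro v
        have h1 := (hsm.diff (R⁻¹ • x)).hasFDerivAt.comp x
          ((R⁻¹ • ContinuousLinearMap.id ℝ (Fin n → ℂ)).hasFDerivAt)
        have h2 : fderiv ℝ (fun x => (f (R⁻¹ • x) : ℂ)) x = _ := h1.fderiv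
        rw [h2]; simp
      unfold Wd
      rw [e, e]; ring
    rw [this, norm_mul, norm_inv, Complex.norm_real, Real.norm_of_nonneg hR.le, div_eq_inv_mul]
    refine mul_le_mul_of_nonneg_left ((hC k _).trans ?_) (by positivity)
    exact (le_abs_self _).trans
      (Finset.single_le_sum (f := fun k => |C k|) (fun j _ => abs_nonneg _) (Finset.mem_univ k))

section
variable {n : ℕ} {V : (Fin n → ℂ) → ℂ} {φ : (Fin n → ℂ) → ℝ}
local notation "cj" => starRingEnd ℂ
local notation "dz" => Wd (-Complex.I)
local notation "db" => Wd Complex.I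

lemma Wd_reflect (a : ℂ) (k : Fin n) {f : (Fin n → ℂ) → ℂ} (hf : Sm f) (x y) :
    Wd a k (fun y => f (x - y)) y = - Wd a k f (x - y) := by
  have e : ∀ v, fderiv ℝ (fun y => f (x - y)) y v = - fderiv ℝ f (x - y) v := by
    intro v
    have h1 := (hf.diff (x - y)).hasFDerivAt.comp y ((hasFDerivAt_id (𝕜 := ℝ) y).const_sub x)
    have h2 : fderiv ℝ (fun y => f (x - y)) y = _ := h1.fderiv
    rw [h2]; simp
  unfold Wd
  rw [e, e]; ring

lemma Sm.reflect {f : (Fin n → ℂ) → ℂ} (hf : Sm f) (x) : Sm (fun y => f (x - y)) :=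
  ContDiff.comp hf (contDiff_const.sub contDiff_id)

lemma loc_mul {f : (Fin n → ℂ) → ℂ} (hf : Continuous f) (hV : LocallyIntegrable V) :
    LocallyIntegrable (fun x => f x * V x) := by
  rw [← locallyIntegrableOn_univ] at hV ⊢
  exact hV.continuousOn_mul hf.continuousOn isOpen_univ.isLocallyClosed

lemma weak_div (hφ : Sm (fun x => (φ x : ℂ))) (hV : LocallyIntegrable V)
    (hL : ∀ g, Sm g → HasCompactSupport g → ∫ x, V x * Lam (fun x => (φ x : ℂ)) g x = 0)
    {ε : ℝ} {ρ : (Fin n → ℂ) → ℝ} (hρ : Moll ε ρ) (x) :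
    ∑ k, dz k (fun x => cv V (db k (fun x => (ρ x : ℂ))) x
      + cv (fun x => db k (fun x => (φ x : ℂ)) x * V x) (fun x => (ρ x : ℂ)) x) x = 0 := by
  have hVk : ∀ k, LocallyIntegrable (fun x => db k (fun x => (φ x : ℂ)) x * V x) :=
    fun k => loc_mul hφ.wd.cont hV
  have hs := hρ.sm
  have hcs := hρ.csc
  have i1 : ∀ k, Integrable (fun y => V y * dz k (db k fun x => (ρ x : ℂ)) (x - y)) :=
    fun k => cv_int hV hs.wd.wd.cont (HCS.wd (HCS.wd hcs)) x
  have i2 : ∀ k, Integrable (fun y => db k (fun x => (φ x : ℂ)) y * V y * dz k (fun x => (ρ x : ℂ)) (x - y)) :=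
    fun k => cv_int (hVk k) hs.wd.cont (HCS.wd hcs) x
  have h0 := hL (fun y => (ρ (x - y) : ℂ)) (hs.reflect x)
    (hcs.comp_homeomorph (Homeomorph.subLeft x))
  rw [← h0]
  have e1 : ∀ y, V y * Lam (fun x => (φ x : ℂ)) (fun y => (ρ (x - y) : ℂ)) y
      = ∑ k, (V y * dz k (db k fun x => (ρ x : ℂ)) (x - y)
        + db k (fun x => (φ x : ℂ)) y * V y * dz k (fun x => (ρ x : ℂ)) (x - y)) := by
    intro y
    unfold Lam
    rw [Finset.mul_sum]
    refine Finset.sum_congr rfl fun k _ => ?_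
    have e2 : dz k (fun y => (ρ (x - y) : ℂ)) = fun y => - dz k (fun x => (ρ x : ℂ)) (x - y) := by
      ext y; exact Wd_reflect _ k hs x y
    rw [e2, Wd_neg, Wd_reflect _ k hs.wd, Wd_comm hs]
    ring
  simp_rw [e1]
  have i3 : ∀ k, Integrable (fun y => V y * dz k (db k fun x => (ρ x : ℂ)) (x - y)
        + db k (fun x => (φ x : ℂ)) y * V y * dz k (fun x => (ρ x : ℂ)) (x - y)) :=
    fun k => (i1 k).add (i2 k)
  rw [integral_finsetSum _ fun k _ => i3 k]
  refine Finset.sum_congr rfl fun k _ => ?_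
  rw [integral_add (i1 k) (i2 k), Wd_add (cv_sm hV hs.wd (HCS.wd hcs)) (cv_sm (hVk k) hs hcs),
    Wd_cv _ k hV hs.wd (HCS.wd hcs), Wd_cv _ k (hVk k) hs hcs]
  rfl

lemma pt_ineq (e χ : ℝ) (he : 0 < e) (hχ : 0 ≤ χ) (D r ζ v : ℂ) :
    e⁻¹ * χ ^ 2 * ‖D‖ ^ 2 ≤ 2 * (((e : ℂ)⁻¹ * D - r) * (χ ^ 2 * cj D + 2 * χ * ζ * cj v)).re
      + 4 * (e * χ ^ 2 * ‖r‖ ^ 2) + 10 * (e⁻¹ * ‖ζ‖ ^ 2 * ‖v‖ ^ 2) := by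
  have h1 : (((e : ℂ)⁻¹ * D - r) * (χ ^ 2 * cj D + 2 * χ * ζ * cj v)).re
      = e⁻¹ * χ ^ 2 * ‖D‖ ^ 2 + ((e : ℂ)⁻¹ * D * (2 * χ * ζ * cj v)).re - (r * (χ ^ 2 * cj D)).re
        - (r * (2 * χ * ζ * cj v)).re := by
    have : ((e⁻¹ * χ ^ 2 * ‖D‖ ^ 2 : ℝ) : ℂ) = (e : ℂ)⁻¹ * χ ^ 2 * (D * cj D) := by
      rw [Complex.mul_conj']; push_cast; rfl
    rw [← Complex.ofReal_re (e⁻¹ * χ ^ 2 * ‖D‖ ^ 2), this, ← Complex.add_re, ← Complex.sub_re, ← Complex.sub_re]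
    congr 1; ring
  have h2 := Complex.abs_re_le_norm ((e : ℂ)⁻¹ * D * (2 * χ * ζ * cj v))
  have h3 := Complex.abs_re_le_norm (r * (χ ^ 2 * cj D))
  have h4 := Complex.abs_re_le_norm (r * (2 * χ * ζ * cj v))
  simp only [norm_mul, norm_pow, norm_inv, Complex.norm_real, Real.norm_of_nonneg he.le,
    Real.norm_of_nonneg hχ, RCLike.norm_conj, Complex.norm_ofNat] at h2 h3 h4
  rw [abs_le] at h2 h3 h4
  obtain ⟨s, hs, rfl⟩ : ∃ s, 0 < s ∧ s ^ 2 = e := ⟨Real.sqrt e, Real.sqrt_pos.2 he, Real.sq_sqrt he.le⟩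
  rw [h1]
  set A := s⁻¹ * χ * ‖D‖ with hA
  set P := s * χ * ‖r‖ with hP
  set B := s⁻¹ * ‖ζ‖ * ‖v‖ with hB
  have g1 : (s ^ 2)⁻¹ * χ ^ 2 * ‖D‖ ^ 2 = A ^ 2 := by rw [hA]; field_simp
  have g2 : s ^ 2 * χ ^ 2 * ‖r‖ ^ 2 = P ^ 2 := by rw [hP]; ring
  have g3 : (s ^ 2)⁻¹ * ‖ζ‖ ^ 2 * ‖v‖ ^ 2 = B ^ 2 := by rw [hB]; field_simp
  have g4 : (s ^ 2)⁻¹ * ‖D‖ * (2 * χ * ‖ζ‖ * ‖v‖) = 2 * A * B := by rw [hA, hB]; field_simp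
  have g5 : ‖r‖ * (χ ^ 2 * ‖D‖) = P * A := by rw [hA, hP]; field_simp
  have g6 : ‖r‖ * (2 * χ * ‖ζ‖ * ‖v‖) = 2 * P * B := by rw [hB, hP]; field_simp
  rw [g4] at h2
  rw [g5] at h3
  rw [g6] at h4
  rw [g1, g2, g3]
  nlinarith [sq_nonneg (A - 4 * B), sq_nonneg (A - 2 * P), sq_nonneg (P - B)]
end


section
variable {n : ℕ} {V : (Fin n → ℂ) → ℂ} {φ : (Fin n → ℂ) → ℝ}
local notation "cj" => starRingEnd ℂ
local notation "dz" => Wd (-Complex.I)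
local notation "db" => Wd Complex.I

/-- regularised function -/
def vreg (φ : (Fin n → ℂ) → ℝ) (V : (Fin n → ℂ) → ℂ) (ρ : (Fin n → ℂ) → ℝ) (x : Fin n → ℂ) : ℂ :=
  Complex.exp (φ x) * cv V (fun x => (ρ x : ℂ)) x

lemma vreg_sm (hφ : Sm (fun x => (φ x : ℂ))) (hV : LocallyIntegrable V) {ε : ℝ} {ρ : (Fin n → ℂ) → ℝ}
    (hρ : Moll ε ρ) : Sm (vreg φ V ρ) := hφ.cexp.mul (cv_sm hV hρ.sm hρ.csc)

lemma caccioppoli (hφ : Sm (fun x => (φ x : ℂ))) (hV : LocallyIntegrable V)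
    (hL : ∀ g, Sm g → HasCompactSupport g → ∫ x, V x * Lam (fun x => (φ x : ℂ)) g x = 0)
    (hQ : Integrable (fun x => Real.exp (φ x) * ‖V x‖ ^ 2))
    {ε δ C R : ℝ} {ρ χ : (Fin n → ℂ) → ℝ} (hρ : Moll ε ρ) (hχ : Cut C R χ)
    (hu : ∀ x ∈ tsupport χ, ∀ y, ‖x - y‖ < ε → φ x ≤ φ y + Real.log 2 ∧
      ∀ k, ‖db k (fun x => (φ x : ℂ)) x - db k (fun x => (φ x : ℂ)) y‖ ≤ δ) :
    ∫ x, ∑ k, (Real.exp (φ x))⁻¹ * χ x ^ 2 * ‖db k (vreg φ V ρ) x‖ ^ 2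
      ≤ n * (8 * δ ^ 2 + 20 * (C / R) ^ 2) * ∫ x, Real.exp (φ x) * ‖V x‖ ^ 2 := by
  set Φ : (Fin n → ℂ) → ℂ := fun x => (φ x : ℂ) with hΦ
  set ρc : (Fin n → ℂ) → ℂ := fun x => (ρ x : ℂ) with hρc
  set X : (Fin n → ℂ) → ℂ := fun x => (χ x : ℂ) with hX
  set v := vreg φ V ρ with hv
  have hvs : Sm v := vreg_sm hφ hV hρ
  have hXs : Sm X := hχ.sm
  have hXc : HasCompactSupport X := hχ.cs.comp_left (g := fun t : ℝ => (t : ℂ)) (by simp)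
  have hs := hρ.sm
  have hcs := hρ.csc
  have hVk : ∀ k, LocallyIntegrable (fun x => db k Φ x * V x) := fun k => loc_mul hφ.wd.cont hV
  set W : Fin n → (Fin n → ℂ) → ℂ := fun k x => cv V (db k ρc) x + cv (fun x => db k Φ x * V x) ρc x with hW
  have hWs : ∀ k, Sm (W k) := fun k => (cv_sm hV hs.wd (HCS.wd hcs)).add (cv_sm (hVk k) hs hcs)
  have hdiv : ∀ x, ∑ k, dz k (W k) x = 0 := fun x => weak_div hφ hV hL hρ x
  set r : Fin n → (Fin n → ℂ) → ℂ := fun k x => db k Φ x * cv V ρc x - cv (fun x => db k Φ x * V x) ρc x with hr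
  have hWr : ∀ k x, W k x = (Real.exp (φ x) : ℂ)⁻¹ * db k v x - r k x := by
    intro k x
    have : db k v x = Complex.exp (φ x) * (db k Φ x * cv V ρc x + cv V (db k ρc) x) := by
      rw [← Wd_cv _ k hV hs hcs, hv]
      unfold vreg
      rw [Wd_mul hφ.cexp (cv_sm hV hs hcs), Wd_cexp hφ]
      ring
    rw [this, hW, hr]
    have he : Complex.exp (φ x) ≠ 0 := Complex.exp_ne_zero _
    push_cast
    field_simp
    ring
  -- test function
  set T : (Fin n → ℂ) → ℂ := fun x => X x * X x * cj (v x) with hT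
  have hTs : Sm T := (hXs.mul hXs).mul hvs.conj
  have hTc : HasCompactSupport T := (hXc.mul_right (f' := X)).mul_right (f' := fun x => cj (v x))
  have hdT : ∀ k x, dz k T x = (χ x : ℂ) ^ 2 * cj (db k v x) + 2 * χ x * dz k X x * cj (v x) := by
    intro k x
    rw [hT, Wd_mul (hXs.mul hXs) hvs.conj, Wd_mul hXs hXs, dz_conj hvs]
    simp only [hX]; ring
  have hZi : ∀ k, Integrable (fun x => W k x * dz k T x) := fun k =>
    ((hWs k).cont.mul hTs.wd.cont).integrable_of_hasCompactSupport (HCS.wd hTc).mul_left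
  have hZ : ∫ x, ∑ k, W k x * dz k T x = 0 := by
    rw [integral_finsetSum _ fun k _ => hZi k]
    have : ∀ k, ∫ x, W k x * dz k T x = - ∫ x, dz k (W k) x * T x := by
      intro k; rw [Wd_ibp (hWs k) hTs (Or.inr hTc), neg_neg]
    simp_rw [this]
    rw [Finset.sum_neg_distrib, ← integral_finsetSum]
    · simp_rw [← Finset.sum_mul, hdiv]; simp
    · exact fun k _ => ((hWs k).wd.cont.mul hTs.cont).integrable_of_hasCompactSupport hTc.mul_left
  have hZI : Integrable (fun x => ∑ k, W k x * dz k T x) := integrable_finsetSum _ fun k _ => hZi k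
  have hZre : ∫ x, (∑ k, W k x * dz k T x).re = 0 := by
    have := integral_re hZI
    simp only [RCLike.re_to_complex] at this
    rw [this, hZ]; simp
  -- Q convolution
  set Q : (Fin n → ℂ) → ℝ := fun x => Real.exp (φ x) * ‖V x‖ ^ 2 with hQd
  set q : (Fin n → ℂ) → ℝ := fun x => ∫ y, Q y * ρ (x - y) with hq
  have hqx : ∀ x, Integrable (fun y => Q y * ρ (x - y)) := fun x =>
    hρ.cs.convolutionExists_right (ContinuousLinearMap.mul ℝ ℝ) hQ.locallyIntegrable hρ.cont x
  have hqI : Integrable q := Integrable.integrable_convolution (ContinuousLinearMap.mul ℝ ℝ) hQ hρ.integrable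
  have hqint : ∫ x, q x = ∫ x, Q x := by
    have := integral_convolution (ContinuousLinearMap.mul ℝ ℝ) hQ hρ.integrable
    rw [hρ.int] at this
    simpa [convolution] using this
  have hq0 : ∀ x, 0 ≤ q x := fun x => integral_nonneg fun y =>
    mul_nonneg (mul_nonneg (Real.exp_pos _).le (sq_nonneg _)) (hρ.nn _)
  -- pointwise
  have b1 : ∀ k x, Real.exp (φ x) * χ x ^ 2 * ‖r k x‖ ^ 2 ≤ 2 * δ ^ 2 * q x := by
    intro k x
    by_cases hx : x ∈ tsupport χ
    · have hrx : r k x = ∫ y, V y * (db k Φ x - db k Φ y) * ρ (x - y) := by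
        rw [hr]
        simp only [cv_apply]
        rw [← integral_const_mul, ← integral_sub ((cv_int hV hs.cont hcs x).const_mul _)
          (cv_int (hVk k) hs.cont hcs x)]
        congr 1; ext y; ring
      have := cv_jensen hρ hV x (s := fun y => db k Φ x - db k Φ y) (δ := δ) (hqx x)
        (fun y hy => (hu x hx y hy).1) (fun y hy => (hu x hx y hy).2 k)
      rw [← hrx] at this
      have h1 : χ x ^ 2 ≤ 1 := pow_le_one₀ (hχ.nn x) (hχ.le_one x)
      calc _ = χ x ^ 2 * (Real.exp (φ x) * ‖r k x‖ ^ 2) := by ring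
        _ ≤ 1 * (Real.exp (φ x) * ‖r k x‖ ^ 2) := by gcongr
        _ ≤ _ := by rw [one_mul]; exact this
    · rw [image_eq_zero_of_notMem_tsupport hx]
      have := hq0 x
      simp; positivity
  have b2 : ∀ k x, (Real.exp (φ x))⁻¹ * ‖dz k X x‖ ^ 2 * ‖v x‖ ^ 2 ≤ 2 * (C / R) ^ 2 * q x := by
    intro k x
    by_cases hx : x ∈ tsupport χ
    · have := cv_jensen hρ hV x (s := fun y => 1) (δ := 1) (hqx x)
        (fun y hy => (hu x hx y hy).1) (fun y hy => by simp)
      simp only [mul_one] at this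
      have hvx : ‖v x‖ ^ 2 = Real.exp (φ x) ^ 2 * ‖∫ y, V y * ρ (x - y)‖ ^ 2 := by
        rw [hv]; unfold vreg
        rw [norm_mul, mul_pow, ← Complex.ofReal_exp, Complex.norm_real, Real.norm_of_nonneg (Real.exp_pos _).le]
        rfl
      have h1 : ‖dz k X x‖ ^ 2 ≤ (C / R) ^ 2 := pow_le_pow_left₀ (norm_nonneg _) (hχ.grad k x) 2
      calc _ = ‖dz k X x‖ ^ 2 * (Real.exp (φ x) * ‖∫ y, V y * ρ (x - y)‖ ^ 2) := by
            rw [hvx]; field_simp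
        _ ≤ (C / R) ^ 2 * (Real.exp (φ x) * ‖∫ y, V y * ρ (x - y)‖ ^ 2) := by gcongr
        _ ≤ (C / R) ^ 2 * (2 * 1 ^ 2 * q x) := by gcongr; 
        _ = _ := by ring
    · have hd0 : dz k X x = 0 := by
        apply image_eq_zero_of_notMem_tsupport
        refine fun h => hx ?_
        have h2 : tsupport (dz k X) ⊆ tsupport X := by
          refine closure_minimal ?_ (isClosed_tsupport _)
          intro y hy
          by_contra h3
          have h4 : fderiv ℝ X y = 0 := by
            apply image_eq_zero_of_notMem_tsupport
            exact fun h5 => h3 (tsupport_fderiv_subset ℝ h5)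
          apply hy
          simp [Wd, h4]
        have h3 : tsupport X ⊆ tsupport χ := closure_mono (Function.support_comp_subset (g := fun t : ℝ => (t : ℂ)) (by simp) χ)
        exact h3 (h2 h)
      have := hq0 x
      rw [hd0]
      simp; positivity
  set S : (Fin n → ℂ) → ℝ := fun x => ∑ k, (Real.exp (φ x))⁻¹ * χ x ^ 2 * ‖db k v x‖ ^ 2 with hS
  have hφc : Continuous φ := by
    exact Complex.continuous_re.comp hφ.cont
  have hχc : Continuous χ := by
    simpa [Function.comp_def] using Complex.continuous_re.comp hχ.sm.cont
  have hSI : Integrable S := by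
    refine integrable_finsetSum _ fun k _ => ?_
    refine Continuous.integrable_of_hasCompactSupport ?_ ?_
    · have := (hvs.wd (a := Complex.I) (k := k)).cont
      have h2 : Continuous fun x => (Real.exp (φ x))⁻¹ :=
        (Real.continuous_exp.comp hφc).inv₀ fun x => (Real.exp_pos _).ne'
      fun_prop
    · refine hχ.cs.mono ?_
      intro x hx
      contrapose! hx
      simp only [Function.mem_support, not_not] at hx ⊢
      simp [hx]
  have hpt : ∀ x, S x - 2 * (∑ k, W k x * dz k T x).re ≤ n * (8 * δ ^ 2 + 20 * (C / R) ^ 2) * q x := by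
    intro x
    rw [hS, Complex.re_sum, Finset.mul_sum, ← Finset.sum_sub_distrib]
    calc _ ≤ ∑ k : Fin n, (8 * δ ^ 2 + 20 * (C / R) ^ 2) * q x := by
          refine Finset.sum_le_sum fun k _ => ?_
          have := pt_ineq (Real.exp (φ x)) (χ x) (Real.exp_pos _) (hχ.nn x) (db k v x) (r k x) (dz k X x) (v x)
          rw [← hWr, ← hdT] at this
          nlinarith [b1 k x, b2 k x]
      _ = _ := by simp; ring
  have hre2 : Integrable (fun x => 2 * (∑ k, W k x * dz k T x).re) := hZI.re.const_mul 2
  calc ∫ x, S x = ∫ x, (S x - 2 * (∑ k, W k x * dz k T x).re) := by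
        rw [integral_sub hSI hre2, integral_const_mul, hZre]; simp
    _ ≤ ∫ x, n * (8 * δ ^ 2 + 20 * (C / R) ^ 2) * q x := by
        exact integral_mono (hSI.sub hre2) (hqI.const_mul _) hpt
    _ = _ := by rw [integral_const_mul, hqint]

lemma unif_nhd (hφ : Sm (fun x => (φ x : ℂ))) {K : Set (Fin n → ℂ)} (hK : IsCompact K) {δ : ℝ} (hδ : 0 < δ) :
    ∃ ε₀ > 0, ∀ ε ≤ ε₀, ∀ x ∈ K, ∀ y, ‖x - y‖ < ε → φ x ≤ φ y + Real.log 2 ∧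
      ∀ k, ‖db k (fun x => (φ x : ℂ)) x - db k (fun x => (φ x : ℂ)) y‖ ≤ δ := by
  have hφc : Continuous φ := by
    exact Complex.continuous_re.comp hφ.cont
  have hc : Continuous (fun x => (φ x, fun k => db k (fun x => (φ x : ℂ)) x)) :=
    hφc.prodMk (continuous_pi fun k => hφ.wd.cont)
  have hl : 0 < Real.log 2 := Real.log_pos (by norm_num)
  have := hK.uniformContinuousAt_of_continuousAt _ (fun a _ => hc.continuousAt)
    (Metric.dist_mem_uniformity (lt_min hl hδ))
  obtain ⟨ε₀, h0, h⟩ := Metric.mem_uniformity_dist.1 this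
  refine ⟨ε₀, h0, fun ε hε x hx y hy => ?_⟩
  have := h (a := x) (b := y) (by rw [dist_eq_norm]; linarith) hx
  simp only [mem_ofPred_eq, Prod.dist_eq, lt_min_iff, max_lt_iff] at this
  obtain ⟨⟨h1, h2⟩, h3, h4⟩ := this
  refine ⟨?_, fun k => ?_⟩
  · rw [Real.dist_eq, abs_lt] at h1; linarith
  · have := (dist_le_pi_dist _ _ k).trans h4.le
    rwa [dist_eq_norm] at this

/-- Lemma 3 -/
lemma weak_hol (hφ : Sm (fun x => (φ x : ℂ))) (hV : LocallyIntegrable V)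
    (hL : ∀ g, Sm g → HasCompactSupport g → ∫ x, V x * Lam (fun x => (φ x : ℂ)) g x = 0)
    (hQ : Integrable (fun x => Real.exp (φ x) * ‖V x‖ ^ 2))
    {η : (Fin n → ℂ) → ℂ} (hη : Sm η) (hηc : HasCompactSupport η) (k : Fin n) :
    ∫ x, V x * (Complex.exp (φ x) * db k η x) = 0 := by
  have hφc : Continuous φ := by
    exact Complex.continuous_re.comp hφ.cont
  set I := ∫ x, V x * (Complex.exp (φ x) * db k η x) with hI
  set Iq := ∫ x, Real.exp (φ x) * ‖V x‖ ^ 2 with hIq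
  have hIq0 : 0 ≤ Iq := integral_nonneg fun x => by positivity
  obtain ⟨C, hC0, hC⟩ := exists_cut n
  set N := ∫ x, Real.exp (φ x) * ‖η x‖ ^ 2 with hN
  have hN0 : 0 ≤ N := integral_nonneg fun x => by positivity
  have hNI : Integrable (fun x => Real.exp (φ x) * ‖η x‖ ^ 2) := by
    refine Continuous.integrable_of_hasCompactSupport ?_ ?_
    · have := hη.cont; fun_prop
    · refine hηc.mono ?_
      intro x hx
      contrapose! hx
      simp only [Function.mem_support, not_not] at hx ⊢
      simp [hx]
  suffices h : ∀ τ > 0, ‖I‖ ≤ τ + (τ + τ) by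
    rw [← norm_le_zero_iff]
    refine le_of_forall_pos_le_add fun τ hτ => ?_
    have := h (τ / 3) (by linarith)
    linarith
  intro τ hτ
  set s := N / τ + 1 with hs
  have hs0 : 0 < s := by positivity
  -- choose R
  set A := n * (8 + 20 * C ^ 2) * Iq with hA
  have hA0 : 0 ≤ A := by positivity
  obtain ⟨M, hM⟩ : ∃ M, ∀ x ∈ tsupport η, ∑ j, ‖x j‖ ^ 2 ≤ M := by
    have hc : ContinuousOn (fun x : Fin n → ℂ => ∑ j, ‖x j‖ ^ 2) (tsupport η) := by fun_prop
    obtain ⟨M, hM⟩ := hηc.bddAbove_image hc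
    exact ⟨M, fun x hx => hM ⟨x, hx, rfl⟩⟩
  set R := 1 + |M| + s * A / τ with hR
  have hR1 : 1 ≤ R := by
    have : 0 ≤ s * A / τ := by positivity
    have := abs_nonneg M
    linarith
  have hR0 : 0 < R := by linarith
  have hRM : M ≤ R ^ 2 := by
    have : 0 ≤ s * A / τ := by positivity
    have := le_abs_self M
    nlinarith [abs_nonneg M]
  have hRA : s * (n * (8 * (1 / R) ^ 2 + 20 * (C / R) ^ 2) * Iq) ≤ τ := by
    have h1 : s * (n * (8 * (1 / R) ^ 2 + 20 * (C / R) ^ 2) * Iq) = s * A / R ^ 2 := by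
      rw [hA]; field_simp
    rw [h1, div_le_iff₀ (by positivity)]
    have h2 : s * A / τ ≤ R := by
      have := abs_nonneg M
      linarith
    rw [div_le_iff₀ hτ] at h2
    nlinarith [mul_nonneg (mul_nonneg hR0.le hτ.le) (sub_nonneg.2 hR1)]
  obtain ⟨χ, hχ⟩ := hC R hR0
  obtain ⟨ε₁, h1, hε₁⟩ := unif_nhd hφ hχ.cs (δ := 1 / R) (by positivity)
  have hψc : Continuous (fun x => Complex.exp (φ x) * db k η x) := (hφ.cexp.mul hη.wd).cont
  have hψs : HasCompactSupport (fun x => Complex.exp (φ x) * db k η x) := (HCS.wd hηc).mul_left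
  obtain ⟨ε₂, h2, hε₂⟩ := cv_tendsto hV hψc hψs hτ
  obtain ⟨ρ, hρ⟩ := exists_moll (n := n) (min ε₁ ε₂) (lt_min h1 h2)
  have H1 := caccioppoli hφ hV hL hQ hρ hχ (hε₁ _ (min_le_left _ _))
  have H2 := hε₂ _ (min_le_right _ _) ρ hρ
  rw [← hI] at H2
  set v := vreg φ V ρ with hv
  have hvs : Sm v := vreg_sm hφ hV hρ
  set J := ∫ x, cv V (fun x => (ρ x : ℂ)) x * (Complex.exp (φ x) * db k η x) with hJ
  have hJv : J = - ∫ x, db k v x * η x := by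
    rw [Wd_ibp hvs hη (Or.inr hηc), neg_neg, hJ]
    congr 1; ext x; rw [hv]; unfold vreg; ring
  have hSi : ∀ k, Integrable (fun x => (Real.exp (φ x))⁻¹ * χ x ^ 2 * ‖db k v x‖ ^ 2) := by
    intro k
    refine Continuous.integrable_of_hasCompactSupport ?_ ?_
    · have := (hvs.wd (a := Complex.I) (k := k)).cont
      have h2 : Continuous fun x => (Real.exp (φ x))⁻¹ :=
        (Real.continuous_exp.comp hφc).inv₀ fun x => (Real.exp_pos _).ne'
      have hχc : Continuous χ := by
        simpa [Function.comp_def] using Complex.continuous_re.comp hχ.sm.cont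
      fun_prop
    · refine hχ.cs.mono ?_
      intro x hx
      contrapose! hx
      simp only [Function.mem_support, not_not] at hx ⊢
      simp [hx]
  have hSum : Integrable (fun x => ∑ k, (Real.exp (φ x))⁻¹ * χ x ^ 2 * ‖db k v x‖ ^ 2) :=
    integrable_finsetSum _ fun k _ => hSi k
  have H3 : ‖J‖ ≤ τ + τ := by
    rw [hJv, norm_neg]
    calc ‖∫ x, db k v x * η x‖ ≤ ∫ x, (s * (∑ k, (Real.exp (φ x))⁻¹ * χ x ^ 2 * ‖db k v x‖ ^ 2)
            + s⁻¹ * (Real.exp (φ x) * ‖η x‖ ^ 2)) := by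
          refine norm_integral_le_of_norm_le ((hSum.const_mul s).add (hNI.const_mul s⁻¹))
            (Filter.Eventually.of_forall fun x => ?_)
          show ‖db k v x * η x‖ ≤ s * (∑ k, (Real.exp (φ x))⁻¹ * χ x ^ 2 * ‖db k v x‖ ^ 2)
            + s⁻¹ * (Real.exp (φ x) * ‖η x‖ ^ 2)
          have hx1 : (Real.exp (φ x))⁻¹ * χ x ^ 2 * ‖db k v x‖ ^ 2
              ≤ ∑ k, (Real.exp (φ x))⁻¹ * χ x ^ 2 * ‖db k v x‖ ^ 2 :=
            Finset.single_le_sum (f := fun k => (Real.exp (φ x))⁻¹ * χ x ^ 2 * ‖db k v x‖ ^ 2)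
              (fun j _ => by positivity) (Finset.mem_univ k)
          by_cases hx : x ∈ tsupport η
          · simp only [hχ.one x ((hM x hx).trans hRM), one_pow, mul_one] at hx1 ⊢
            rw [norm_mul]
            have he := Real.exp_pos (φ x)
            set e := Real.exp (φ x)
            set a := ‖db k v x‖
            set c := ‖η x‖
            have h5 : a * c ≤ s * (e⁻¹ * a ^ 2) + s⁻¹ * (e * c ^ 2) := by
              have h6 : s * (e⁻¹ * a ^ 2) + s⁻¹ * (e * c ^ 2) = (s * e)⁻¹ * ((s * a) ^ 2 + (e * c) ^ 2) := by
                field_simp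
              have h7 : a * c = (s * e)⁻¹ * ((s * a) * (e * c)) := by field_simp
              rw [h6, h7]
              refine mul_le_mul_of_nonneg_left ?_ (by positivity)
              nlinarith [sq_nonneg (s * a - e * c), sq_nonneg (s * a), sq_nonneg (e * c)]
            exact h5.trans (add_le_add (mul_le_mul_of_nonneg_left hx1 hs0.le) le_rfl)
          · rw [image_eq_zero_of_notMem_tsupport hx]
            simp
            positivity
      _ = s * (∫ x, ∑ k, (Real.exp (φ x))⁻¹ * χ x ^ 2 * ‖db k v x‖ ^ 2) + s⁻¹ * N := by
          rw [integral_add (hSum.const_mul s) (hNI.const_mul s⁻¹), integral_const_mul, integral_const_mul]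
      _ ≤ τ + τ := by
          refine add_le_add ((mul_le_mul_of_nonneg_left H1 hs0.le).trans hRA) ?_
          rw [inv_mul_le_iff₀ hs0, hs]
          have : N / τ * τ = N := by field_simp
          nlinarith
  calc ‖I‖ ≤ ‖J - I‖ + ‖J‖ := by
        have := norm_sub_le J (J - I)
        rw [sub_sub_cancel] at this
        linarith
    _ ≤ _ := add_le_add H2 H3
end


section
variable {n : ℕ}
local notation "db" => Wd Complex.I

lemma rot_mp (c : ℂ) (hc : ‖c‖ = 1) :
    MeasurePreserving (fun x : Fin n → ℂ => c • x) volume volume := by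
  have h1 : MeasurePreserving (fun z : ℂ => c * z) volume volume :=
    (rotation ⟨c, mem_sphere_zero_iff_norm.2 hc⟩).measurePreserving
  exact volume_preserving_pi (f := fun _ : Fin n => fun z : ℂ => c * z) fun _ => h1

lemma rot_int {E : Type*} [NormedAddCommGroup E] [NormedSpace ℝ E] (c : ℂ) (hc : ‖c‖ = 1)
    (f : (Fin n → ℂ) → E) : ∫ x, f (c • x) = ∫ x, f x := by
  have hc0 : c ≠ 0 := by rintro rfl; simp at hc
  exact (rot_mp c hc).integral_comp
    (Homeomorph.smulOfNeZero c hc0 : (Fin n → ℂ) ≃ₜ (Fin n → ℂ)).measurableEmbedding f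

lemma mean_val {h a : (Fin n → ℂ) → ℂ} (hh : Continuous h)
    (hd : ∀ w : Fin n → ℂ, Differentiable ℂ (fun ζ : ℂ => h (ζ • w)))
    (ha : Continuous a) (hac : HasCompactSupport a) (hai : ∀ (c : ℂ) x, ‖c‖ = 1 → a (c • x) = a x) :
    ∫ x, a x * h x = h 0 * ∫ x, a x := by
  set e : ℝ → ℂ := fun t => circleMap 0 1 t with he
  have hen : ∀ t, ‖e t‖ = 1 := fun t => by simp [he]
  have hec : Continuous e := continuous_circleMap 0 1
  have haI : Integrable a := ha.integrable_of_hasCompactSupport hac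
  obtain ⟨r, hr⟩ := hac.isBounded.subset_closedBall (0 : Fin n → ℂ)
  obtain ⟨M, hM⟩ := (isCompact_closedBall (0 : Fin n → ℂ) r).exists_bound_of_continuousOn hh.continuousOn
  set μ := (volume : Measure ℝ).restrict (Ioc 0 (2 * Real.pi)) with hμ
  have hI : Integrable (Function.uncurry fun (t : ℝ) (x : Fin n → ℂ) => a x * h (e t • x)) (μ.prod volume) := by
    refine Integrable.mono' ((haI.norm.mul_const M).comp_snd μ) ?_ ?_
    · have : Continuous (Function.uncurry fun (t : ℝ) (x : Fin n → ℂ) => a x * h (e t • x)) := by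
        unfold Function.uncurry
        exact (ha.comp continuous_snd).mul (hh.comp ((hec.comp continuous_fst).smul continuous_snd))
      exact this.aestronglyMeasurable
    · refine Filter.Eventually.of_forall fun ⟨t, x⟩ => ?_
      simp only [Function.uncurry, norm_mul]
      by_cases hx : x ∈ tsupport a
      · refine mul_le_mul_of_nonneg_left (hM _ ?_) (norm_nonneg _)
        have := hr hx
        rw [mem_closedBall_zero_iff] at this ⊢
        rwa [norm_smul, hen, one_mul]
      · rw [image_eq_zero_of_notMem_tsupport hx]; simp
  have hsw := integral_integral_swap hI
  have hL : ∀ t, ∫ x, a x * h (e t • x) = ∫ x, a x * h x := by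
    intro t
    rw [← rot_int (e t) (hen t) (fun x => a x * h x)]
    congr 1; ext x; rw [hai _ _ (hen t)]
  have hR : ∀ x, ∫ t, a x * h (e t • x) ∂μ = a x * ((2 * Real.pi : ℝ) * h 0) := by
    intro x
    rw [integral_const_mul]
    congr 1
    have := circleAverage_of_differentiable_on_off_countable (c := 0) (R := 1) countable_empty
      (hd x).continuous.continuousOn (fun z _ => hd x z)
    rw [Real.circleAverage_def, zero_smul, intervalIntegral.integral_of_le (by positivity)] at this
    rw [← this]
    rw [Complex.real_smul, ← mul_assoc, ← Complex.ofReal_mul, mul_inv_cancel₀ (by positivity)]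
    simp [he, hμ]
  simp_rw [hL, hR] at hsw
  rw [integral_const, integral_mul_const] at hsw
  have hμ1 : μ.real univ = 2 * Real.pi := by
    simp [hμ, Real.pi_pos.le]
  rw [hμ1, Complex.real_smul] at hsw
  have hpi : ((2 * Real.pi : ℝ) : ℂ) ≠ 0 := by
    rw [Complex.ofReal_ne_zero]; positivity
  apply mul_left_cancel₀ hpi
  rw [hsw]; ring

lemma hol_of_db {h : (Fin n → ℂ) → ℂ} (hs : Sm h) (hd : ∀ k x, db k h x = 0) (w : Fin n → ℂ) :
    Differentiable ℂ (fun ζ : ℂ => h (ζ • w)) := by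
  have hk : ∀ x (k : Fin n), fderiv ℝ h x (Pi.single k Complex.I) = Complex.I * fderiv ℝ h x (Pi.single k 1) := by
    intro x k
    have := hd k x
    unfold Wd at this
    have h2 : fderiv ℝ h x (Pi.single k 1) + Complex.I * fderiv ℝ h x (Pi.single k Complex.I) = 0 := by
      linear_combination 2 * this
    linear_combination (-Complex.I) * h2 + (fderiv ℝ h x (Pi.single k Complex.I)) * Complex.I_mul_I
  have hz : ∀ x (k : Fin n) (z : ℂ), fderiv ℝ h x (Pi.single k z) = z * fderiv ℝ h x (Pi.single k 1) := by
    intro x k z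
    have : (Pi.single k z : Fin n → ℂ) = z.re • (Pi.single k 1 : Fin n → ℂ) + z.im • (Pi.single k Complex.I : Fin n → ℂ) := by
      rw [← Pi.single_smul, ← Pi.single_smul, ← Pi.single_add]
      congr 1
      simp
    rw [this, map_add, map_smul, map_smul, hk, Complex.real_smul, Complex.real_smul]
    conv_rhs => rw [← Complex.re_add_im z]
    ring
  have hv : ∀ x v, fderiv ℝ h x v = ∑ k, v k * fderiv ℝ h x (Pi.single k 1) := by
    intro x v
    conv_lhs => rw [← Finset.univ_sum_single v]
    rw [map_sum]
    exact Finset.sum_congr rfl fun k _ => hz x k _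
  intro ζ
  have hcd : HasFDerivAt (fun ζ : ℂ => h (ζ • w))
      ((fderiv ℝ h (ζ • w)).comp ((ContinuousLinearMap.id ℝ ℂ).smulRight w)) ζ :=
    (hs.diff (ζ • w)).hasFDerivAt.comp ζ ((hasFDerivAt_id (𝕜 := ℝ) ζ).smul_const w)
  rw [differentiableAt_complex_iff_differentiableAt_real]
  refine ⟨hcd.differentiableAt, ?_⟩
  rw [hcd.fderiv]
  simp only [ContinuousLinearMap.comp_apply, ContinuousLinearMap.smulRight_apply, ContinuousLinearMap.id_apply,
    one_smul, smul_eq_mul]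
  rw [hv _ (Complex.I • w), hv _ w, Finset.mul_sum]
  refine Finset.sum_congr rfl fun k _ => ?_
  simp; ring

/-- Lemma 4 -/
lemma weak_mean {H : (Fin n → ℂ) → ℂ} (hH : LocallyIntegrable H)
    (hw : ∀ η, Sm η → HasCompactSupport η → ∀ k, ∫ x, H x * db k η x = 0)
    {a₁ a₂ : (Fin n → ℂ) → ℂ}
    (h₁ : Continuous a₁) (hc₁ : HasCompactSupport a₁) (hi₁ : ∀ (c : ℂ) x, ‖c‖ = 1 → a₁ (c • x) = a₁ x)
    (h₂ : Continuous a₂) (hc₂ : HasCompactSupport a₂) (hi₂ : ∀ (c : ℂ) x, ‖c‖ = 1 → a₂ (c • x) = a₂ x) :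
    (∫ x, H x * a₂ x) * ∫ x, a₁ x = (∫ x, H x * a₁ x) * ∫ x, a₂ x := by
  set X1 := ∫ x, H x * a₁ x
  set X2 := ∫ x, H x * a₂ x
  set A1 := ∫ x, a₁ x
  set A2 := ∫ x, a₂ x
  suffices hh : ∀ τ > 0, ‖X2 * A1 - X1 * A2‖ ≤ τ * (‖A1‖ + ‖A2‖) by
    rw [← sub_eq_zero, ← norm_le_zero_iff]
    have hpos : 0 < ‖A1‖ + ‖A2‖ + 1 := by positivity
    refine le_of_forall_pos_le_add fun τ hτ => ?_
    have := hh (τ / (‖A1‖ + ‖A2‖ + 1)) (by positivity)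
    refine this.trans ?_
    rw [zero_add, div_mul_eq_mul_div, div_le_iff₀ hpos]
    nlinarith
  intro τ hτ
  obtain ⟨ε₁, e1, he1⟩ := cv_tendsto hH h₁ hc₁ hτ
  obtain ⟨ε₂, e2, he2⟩ := cv_tendsto hH h₂ hc₂ hτ
  obtain ⟨ρ, hρ⟩ := exists_moll (n := n) (min ε₁ ε₂) (lt_min e1 e2)
  have H1 := he1 _ (min_le_left _ _) ρ hρ
  have H2 := he2 _ (min_le_right _ _) ρ hρ
  set h := cv H (fun x => (ρ x : ℂ)) with hhd
  have hs : Sm h := cv_sm hH hρ.sm hρ.csc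
  have hdb : ∀ k x, db k h x = 0 := by
    intro k x
    rw [hhd, Wd_cv _ k hH hρ.sm hρ.csc, cv_apply]
    have := hw (fun y => (ρ (x - y) : ℂ)) (hρ.sm.reflect x) (hρ.csc.comp_homeomorph (Homeomorph.subLeft x)) k
    have e : ∀ y, db k (fun y => (ρ (x - y) : ℂ)) y = - db k (fun x => (ρ x : ℂ)) (x - y) :=
      fun y => Wd_reflect _ k hρ.sm x y
    simp_rw [e, mul_neg] at this
    rw [integral_neg, neg_eq_zero] at this
    exact this
  have hol := hol_of_db hs hdb
  have m1 := mean_val hs.cont hol h₁ hc₁ hi₁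
  have m2 := mean_val hs.cont hol h₂ hc₂ hi₂
  simp_rw [mul_comm (h _) (a₁ _)] at H1
  simp_rw [mul_comm (h _) (a₂ _)] at H2
  rw [m1] at H1
  rw [m2] at H2
  calc ‖X2 * A1 - X1 * A2‖ = ‖(h 0 * A1 - X1) * A2 - (h 0 * A2 - X2) * A1‖ := by congr 1; ring
    _ ≤ ‖h 0 * A1 - X1‖ * ‖A2‖ + ‖h 0 * A2 - X2‖ * ‖A1‖ := by
        refine (norm_sub_le _ _).trans ?_
        rw [norm_mul, norm_mul]
    _ ≤ τ * ‖A2‖ + τ * ‖A1‖ := by gcongr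
    _ = _ := by ring

/-- Lemma 5 -/
lemma orth_mean {V u : (Fin n → ℂ) → ℂ} {φ : (Fin n → ℂ) → ℝ}
    (hφ : Sm (fun x => (φ x : ℂ))) (hφi : ∀ (c : ℂ) x, ‖c‖ = 1 → φ (c • x) = φ x)
    (hu : Continuous u) (hui : ∀ (c : ℂ) x, ‖c‖ = 1 → u (c • x) = u x)
    (hV : Integrable V) (huV : Integrable (fun x => u x * V x))
    (hE : Integrable (fun x => Complex.exp (-φ x))) (huE : Integrable (fun x => u x * Complex.exp (-φ x)))
    (hL : ∀ g, Sm g → HasCompactSupport g → ∫ x, V x * Lam (fun x => (φ x : ℂ)) g x = 0)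
    (hQ : Integrable (fun x => Real.exp (φ x) * ‖V x‖ ^ 2)) :
    (∫ x, u x * V x) * ∫ x, Complex.exp (-φ x) = (∫ x, V x) * ∫ x, u x * Complex.exp (-φ x) := by
  obtain ⟨C, hC0, hC⟩ := exists_cut n
  choose χ hχ using fun m : ℕ => hC (m + 1) (by positivity)
  have hH : LocallyIntegrable (fun x => Complex.exp (φ x) * V x) :=
    loc_mul hφ.cexp.cont hV.locallyIntegrable
  have hw : ∀ η, Sm η → HasCompactSupport η → ∀ k, ∫ x, Complex.exp (φ x) * V x * db k η x = 0 := by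
    intro η hη hηc k
    rw [← weak_hol hφ hV.locallyIntegrable hL hQ hη hηc k]
    congr 1; ext x; ring
  have hEc : Continuous (fun x => Complex.exp (-φ x)) := hφ.neg.cexp.cont
  have hXc : ∀ m, HasCompactSupport (fun x => (χ m x : ℂ)) := fun m =>
    (hχ m).cs.comp_left (g := fun t : ℝ => (t : ℂ)) (by simp)
  have key : ∀ m, (∫ x, χ m x * (u x * V x)) * ∫ x, χ m x * Complex.exp (-φ x)
      = (∫ x, χ m x * V x) * ∫ x, χ m x * (u x * Complex.exp (-φ x)) := by
    intro m
    have := weak_mean hH hw (a₁ := fun x => χ m x * Complex.exp (-φ x))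
      (a₂ := fun x => χ m x * (u x * Complex.exp (-φ x)))
      ((hχ m).sm.cont.mul hEc) (hXc m).mul_right
      (fun c x hc => by rw [(hχ m).inv c x hc, hφi c x hc])
      ((hχ m).sm.cont.mul (hu.mul hEc)) (hXc m).mul_right
      (fun c x hc => by rw [(hχ m).inv c x hc, hφi c x hc, hui c x hc])
    have e : ∀ x, Complex.exp (φ x) * Complex.exp (-φ x) = 1 := fun x => by
      rw [← Complex.exp_add]; simp
    convert this using 2
    · congr 1; ext x; linear_combination (-χ m x * u x * V x) * e x
    · congr 1; ext x; linear_combination (-χ m x * V x) * e x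
  have lim : ∀ f : (Fin n → ℂ) → ℂ, Integrable f →
      Filter.Tendsto (fun m => ∫ x, χ m x * f x) Filter.atTop (nhds (∫ x, f x)) := by
    intro f hf
    refine tendsto_integral_of_dominated_convergence (fun x => ‖f x‖) ?_ hf.norm ?_ ?_
    · exact fun m => (hχ m).sm.cont.aestronglyMeasurable.mul hf.aestronglyMeasurable
    · refine fun m => Filter.Eventually.of_forall fun x => ?_
      rw [norm_mul, Complex.norm_real, Real.norm_of_nonneg ((hχ m).nn x)]
      exact mul_le_of_le_one_left (norm_nonneg _) ((hχ m).le_one x)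
    · refine Filter.Eventually.of_forall fun x => ?_
      refine tendsto_const_nhds.congr' ?_
      filter_upwards [Filter.eventually_ge_atTop ⌈∑ j, ‖x j‖ ^ 2⌉₊] with m hm
      rw [(hχ m).one x]
      · simp
      · have := Nat.ceil_le.1 hm
        have h0 : (0 : ℝ) ≤ m := by positivity
        nlinarith
  refine tendsto_nhds_unique (((lim _ huV).mul (lim _ hE)).congr fun m => key m) ((lim _ hV).mul (lim _ huE))
end


section
variable {n : ℕ}
local notation "cj" => starRingEnd ℂ
local notation "dz" => Wd (-Complex.I)
local notation "db" => Wd Complex.I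

lemma Lam_add (φ : (Fin n → ℂ) → ℂ) {g h : (Fin n → ℂ) → ℂ} (hg : Sm g) (hh : Sm h) (x) :
    Lam φ (fun x => g x + h x) x = Lam φ g x + Lam φ h x := by
  unfold Lam
  rw [← Finset.sum_add_distrib]
  refine Finset.sum_congr rfl fun k _ => ?_
  have : dz k (fun x => g x + h x) = fun x => dz k g x + dz k h x := by
    ext x; exact Wd_add hg hh x
  rw [this, Wd_add hg.wd hh.wd]; ring

lemma Lam_smul (φ : (Fin n → ℂ) → ℂ) (c : ℂ) {g : (Fin n → ℂ) → ℂ} (hg : Sm g) (x) :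
    Lam φ (fun x => c * g x) x = c * Lam φ g x := by
  unfold Lam
  rw [Finset.mul_sum]
  refine Finset.sum_congr rfl fun k _ => ?_
  have : dz k (fun x => c * g x) = fun x => c * dz k g x := by
    ext x; rw [Wd_mul (Sm.const c) hg, Wd_const]; ring
  rw [this, Wd_mul (Sm.const c) hg.wd, Wd_const]; ring

lemma lp_norm_sq (f : Lp ℂ 2 (volume : Measure (Fin n → ℂ))) : ‖f‖ ^ 2 = ∫ x, ‖f x‖ ^ 2 := by
  rw [← inner_self_eq_norm_sq (𝕜 := ℂ), L2.inner_def]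
  simp_rw [inner_self_eq_norm_sq_to_K]
  have := integral_ofReal (𝕜 := ℂ) (μ := (volume : Measure (Fin n → ℂ))) (f := fun x => ‖f x‖ ^ 2)
  push_cast at this
  rw [this]; simp

/-- the subspace of images -/
def imS (φ : (Fin n → ℂ) → ℂ) (E : (Fin n → ℂ) → ℂ) : Submodule ℂ (Lp ℂ 2 (volume : Measure (Fin n → ℂ))) where
  carrier := {f | ∃ g, Sm g ∧ HasCompactSupport g ∧ f =ᵐ[volume] fun x => E x * Lam φ g x}
  zero_mem' := ⟨fun _ => 0, Sm.const 0, HasCompactSupport.zero, by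
    filter_upwards [Lp.coeFn_zero ℂ 2 (volume : Measure (Fin n → ℂ))] with x hx
    rw [hx]
    have := Lam_smul φ 0 (Sm.const (n := n) 0) x
    simp only [zero_mul] at this
    simp [this]⟩
  add_mem' := by
    rintro f f' ⟨g, hg, hgc, h⟩ ⟨g', hg', hgc', h'⟩
    refine ⟨fun x => g x + g' x, hg.add hg', hgc.add hgc', ?_⟩
    filter_upwards [Lp.coeFn_add f f', h, h'] with x h1 h2 h3
    rw [h1, Pi.add_apply, h2, h3, Lam_add φ hg hg']; ring
  smul_mem' := by
    rintro c f ⟨g, hg, hgc, h⟩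
    refine ⟨fun x => c * g x, (Sm.const c).mul hg, hgc.mul_left, ?_⟩
    filter_upwards [Lp.coeFn_smul c f, h] with x h1 h2
    rw [h1, Pi.smul_apply, h2, Lam_smul φ c hg, smul_eq_mul]; ring

variable {ι : Type*} [Fintype ι] {F : ι → (Fin n → ℂ) → ℂ}

lemma variance_ineq (b : ι → ℝ) (hF : ∀ i, Sm (F i)) (hh : ∀ i k x, db k (F i) x = 0)
    (hinv : ∀ i (c : ℂ) x, ‖c‖ = 1 → ‖F i (c • x)‖ = ‖F i x‖) (m : ℝ)
    (h0 : Integrable (fun x => Real.exp (-(∑ i, ‖F i x‖ ^ 2))))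
    (h1 : Integrable (fun x => (∑ i, b i ^ 2 * ‖F i x‖ ^ 2) * Real.exp (-(∑ i, ‖F i x‖ ^ 2))))
    (h2 : Integrable (fun x => (∑ i, b i * ‖F i x‖ ^ 2) ^ 2 * Real.exp (-(∑ i, ‖F i x‖ ^ 2))))
    (h3 : Integrable (fun x => (∑ i, b i * ‖F i x‖ ^ 2) * Real.exp (-(∑ i, ‖F i x‖ ^ 2))))
    (hm : ∫ x, (∑ i, b i * ‖F i x‖ ^ 2 - m) * Real.exp (-(∑ i, ‖F i x‖ ^ 2)) = 0) :
    ∫ x, (∑ i, b i * ‖F i x‖ ^ 2 - m) ^ 2 * Real.exp (-(∑ i, ‖F i x‖ ^ 2))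
      ≤ ∫ x, (∑ i, b i ^ 2 * ‖F i x‖ ^ 2) * Real.exp (-(∑ i, ‖F i x‖ ^ 2)) := by
  set φ : (Fin n → ℂ) → ℝ := fun x => ∑ i, ‖F i x‖ ^ 2 with hφd
  set u : (Fin n → ℂ) → ℝ := fun x => ∑ i, b i * ‖F i x‖ ^ 2 - m with hud
  set M := ∫ x, (∑ i, b i ^ 2 * ‖F i x‖ ^ 2) * Real.exp (-φ x) with hM
  have hsos : sosq F = fun x => (φ x : ℂ) := by ext x; exact sosq_eq x
  have hwsos : ∀ x, wsosq b F x - m = (u x : ℂ) := by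
    intro x; rw [wsosq_eq, hud]; push_cast; ring
  have hφ : Sm (fun x => (φ x : ℂ)) := by rw [← hsos]; exact sosq_sm hF
  have hFc := fun i => (hF i).cont
  have hφc : Continuous φ := by rw [hφd]; fun_prop
  have huc : Continuous u := by rw [hud]; fun_prop
  set E : (Fin n → ℂ) → ℝ := fun x => Real.exp (-φ x / 2) with hE
  have hEc : Continuous E := by rw [hE]; fun_prop
  have hEE : ∀ x, E x * E x = Real.exp (-φ x) := by
    intro x; rw [hE, ← Real.exp_add]; congr 1; ring
  have hEpos : ∀ x, 0 < E x := fun x => Real.exp_pos _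
  set U : (Fin n → ℂ) → ℂ := fun x => (u x * E x : ℝ) with hU
  have hUc : Continuous U := by rw [hU]; fun_prop
  have hu2 : Integrable (fun x => u x ^ 2 * Real.exp (-φ x)) := by
    have : (fun x => u x ^ 2 * Real.exp (-φ x)) = fun x => (∑ i, b i * ‖F i x‖ ^ 2) ^ 2 * Real.exp (-φ x)
        - 2 * m * ((∑ i, b i * ‖F i x‖ ^ 2) * Real.exp (-φ x)) + m ^ 2 * Real.exp (-φ x) := by
      ext x; rw [hud]; ring
    rw [this]
    exact (h2.sub (h3.const_mul _)).add (h0.const_mul _)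
  have hu1 : Integrable (fun x => u x * Real.exp (-φ x)) := by
    have : (fun x => u x * Real.exp (-φ x)) = fun x => (∑ i, b i * ‖F i x‖ ^ 2) * Real.exp (-φ x)
        - m * Real.exp (-φ x) := by
      ext x; rw [hud]; ring
    rw [this]
    exact h3.sub (h0.const_mul _)
  have hUn : ∀ x, ‖U x‖ ^ 2 = u x ^ 2 * Real.exp (-φ x) := by
    intro x; rw [hU, Complex.norm_real, Real.norm_eq_abs, sq_abs, mul_pow, ← hEE]; ring
  have hUL : MemLp U 2 := by
    rw [memLp_two_iff_integrable_sq_norm hUc.aestronglyMeasurable]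
    simp_rw [hUn]; exact hu2
  have hEL : MemLp (fun x => (E x : ℂ)) 2 := by
    have hEcc : Continuous (fun x => (E x : ℂ)) := Complex.continuous_ofReal.comp hEc
    rw [memLp_two_iff_integrable_sq_norm hEcc.aestronglyMeasurable]
    refine h0.congr (Filter.Eventually.of_forall fun x => ?_)
    simp only [Complex.norm_real, Real.norm_eq_abs, sq_abs]
    rw [sq, hEE]
  set Uh := hUL.toLp U with hUh
  have hUae : Uh =ᵐ[volume] U := hUL.coeFn_toLp
  set S := imS (fun x => (φ x : ℂ)) (fun x => (E x : ℂ)) with hS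
  -- closed condition
  have hcl : IsClosed {s : Lp ℂ 2 (volume : Measure (Fin n → ℂ)) | 2 * (inner ℂ s Uh).re ≤ M + ‖s‖ ^ 2} := by
    refine isClosed_le ?_ ?_
    · exact continuous_const.mul (Complex.continuous_re.comp (continuous_id.inner continuous_const))
    · fun_prop
  have hsub : (S : Set (Lp ℂ 2 (volume : Measure (Fin n → ℂ)))) ⊆
      {s | 2 * (inner ℂ s Uh).re ≤ M + ‖s‖ ^ 2} := by
    rintro s ⟨g, hg, hgc, hs⟩
    have key := key_ineq b hF hh hg hgc m h1
    have e1 : inner ℂ s Uh = ∫ x, (wsosq b F x - m) * cj (Lam (sosq F) g x) * Complex.exp (-sosq F x) := by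
      rw [L2.inner_def]
      refine integral_congr_ae ?_
      filter_upwards [hs, hUae] with x hx1 hx2
      rw [hx1, hx2, hwsos, hsos]
      simp only [RCLike.inner_apply, map_mul, Complex.conj_ofReal, hU]
      have : Complex.exp (-(φ x : ℂ)) = ((E x * E x : ℝ) : ℂ) := by rw [hEE]; push_cast; rfl
      rw [this]; push_cast; ring
    have e2 : ‖s‖ ^ 2 = ∫ x, ‖Lam (sosq F) g x‖ ^ 2 * Real.exp (-φ x) := by
      rw [lp_norm_sq]
      refine integral_congr_ae ?_
      filter_upwards [hs] with x hx1
      rw [hx1, norm_mul, Complex.norm_real, Real.norm_of_nonneg (hEpos x).le, mul_pow, sq (E x), hEE, hsos]; ring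
    show 2 * (inner ℂ s Uh).re ≤ M + ‖s‖ ^ 2
    rw [e1, e2]
    exact key
  have hmem : Uh ∈ closure (S : Set (Lp ℂ 2 (volume : Measure (Fin n → ℂ)))) := by
    have : Uh ∈ S.topologicalClosure := by
      rw [← Submodule.orthogonal_orthogonal_eq_closure, Submodule.mem_orthogonal]
      intro v hv
      rw [Submodule.mem_orthogonal'] at hv
      have hvL : MemLp (fun x => cj (v x)) 2 := by
        have := Lp.memLp v
        exact this.star
      set V : (Fin n → ℂ) → ℂ := fun x => E x * cj (v x) with hV
      have hVI : Integrable V := hEL.integrable_mul hvL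
      have huV : ∀ x, (u x : ℂ) * V x = U x * cj (v x) := by
        intro x; rw [hV, hU]; push_cast; ring
      have huVI : Integrable (fun x => (u x : ℂ) * V x) := by
        simp_rw [huV]; exact hUL.integrable_mul hvL
      have hcE : ∀ x, Complex.exp (-(φ x : ℂ)) = ((Real.exp (-φ x) : ℝ) : ℂ) := by
        intro x; push_cast; rfl
      have hφi : ∀ (c : ℂ) x, ‖c‖ = 1 → φ (c • x) = φ x := by
        intro c x hc; simp only [hφd, hinv _ c x hc]
      have hui : ∀ (c : ℂ) x, ‖c‖ = 1 → (u (c • x) : ℂ) = u x := by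
        intro c x hc; simp only [hud, hinv _ c x hc]
      have hL : ∀ g, Sm g → HasCompactSupport g → ∫ x, V x * Lam (fun x => (φ x : ℂ)) g x = 0 := by
        intro g hg hgc
        have hGc : Continuous (fun x => (E x : ℂ) * Lam (fun x => (φ x : ℂ)) g x) :=
          (Complex.continuous_ofReal.comp hEc).mul (Lam_sm hφ hg).cont
        have hGL : MemLp (fun x => (E x : ℂ) * Lam (fun x => (φ x : ℂ)) g x) 2 :=
          hGc.memLp_of_hasCompactSupport (Lam_cs hgc).mul_left
        have h5 := hv (hGL.toLp _) ⟨g, hg, hgc, hGL.coeFn_toLp⟩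
        rw [L2.inner_def] at h5
        rw [← h5]
        refine integral_congr_ae ?_
        filter_upwards [hGL.coeFn_toLp] with x hx
        rw [hx]
        simp only [RCLike.inner_apply, hV]; ring
      have hQ : Integrable (fun x => Real.exp (φ x) * ‖V x‖ ^ 2) := by
        have h6 := (memLp_two_iff_integrable_sq_norm (Lp.memLp v).1).1 (Lp.memLp v)
        refine h6.congr (Filter.Eventually.of_forall fun x => ?_)
        show ‖v x‖ ^ 2 = Real.exp (φ x) * ‖V x‖ ^ 2
        rw [hV, norm_mul, Complex.norm_real, Real.norm_of_nonneg (hEpos x).le, mul_pow, sq (E x), hEE,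
          RCLike.norm_conj, ← mul_assoc, ← Real.exp_add]
        simp
      have h7 := orth_mean hφ hφi (u := fun x => (u x : ℂ)) (by fun_prop) hui hVI huVI
        (by simp_rw [hcE]; exact h0.ofReal)
        (by simp_rw [hcE, ← Complex.ofReal_mul]; exact hu1.ofReal) hL hQ
      have h8 : ∫ x, (u x : ℂ) * Complex.exp (-φ x) = 0 := by
        simp_rw [hcE, ← Complex.ofReal_mul]
        rw [integral_complex_ofReal, hm]; simp
      have h9 : ∫ x, Complex.exp (-(φ x : ℂ)) ≠ 0 := by
        simp_rw [hcE]
        rw [integral_complex_ofReal, Complex.ofReal_ne_zero]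
        exact (integral_exp_pos h0).ne'
      rw [h8, mul_zero, mul_eq_zero, or_iff_left h9] at h7
      rw [L2.inner_def, ← h7]
      refine integral_congr_ae ?_
      filter_upwards [hUae] with x hx
      rw [hx, huV]
      simp only [RCLike.inner_apply]
    exact this
  have hfin := closure_minimal hsub hcl hmem
  have hfin2 : 2 * (inner ℂ Uh Uh).re ≤ M + ‖Uh‖ ^ 2 := hfin
  have e3 : (inner ℂ Uh Uh).re = ‖Uh‖ ^ 2 := inner_self_eq_norm_sq (𝕜 := ℂ) Uh
  have e4 : ‖Uh‖ ^ 2 = ∫ x, u x ^ 2 * Real.exp (-φ x) := by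
    rw [lp_norm_sq]
    refine integral_congr_ae ?_
    filter_upwards [hUae] with x hx
    rw [hx, hUn]
  rw [← e4]
  linarith
end


lemma pt_dom {c A D g ψ : ℝ} (hc : 0 < c) (hA : 0 ≤ A) (hD : 0 ≤ D) (hψ : c * A ≤ ψ)
    (hg : |g| ≤ D * (1 + A + A ^ 2)) :
    |g * Real.exp (-ψ)| ≤ D * (1 + 2 / c + 16 / c ^ 2) * Real.exp (-(c / 2 * A)) := by
  have e1 : ∀ k : ℝ, 0 < k → A * Real.exp (-(k * A)) ≤ 1 / k := by
    intro k hk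
    have h := Real.add_one_le_exp (k * A)
    rw [Real.exp_neg, ← div_eq_mul_inv, div_le_div_iff₀ (Real.exp_pos _) hk]
    nlinarith
  have h1 := e1 (c / 2) (by positivity)
  have h2 := e1 (c / 4) (by positivity)
  have hs : Real.exp (-(c * A)) = Real.exp (-(c / 2 * A)) * Real.exp (-(c / 2 * A)) := by
    rw [← Real.exp_add]; ring_nf
  have hs2 : Real.exp (-(c / 2 * A)) = Real.exp (-(c / 4 * A)) ^ 2 := by
    rw [sq, ← Real.exp_add]; ring_nf
  have h3 : A ^ 2 * Real.exp (-(c / 2 * A)) ≤ 16 / c ^ 2 := by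
    rw [hs2, ← mul_pow]
    calc _ ≤ (1 / (c / 4)) ^ 2 := by
          apply pow_le_pow_left₀ (by positivity) h2
      _ = _ := by field_simp; norm_num
  have h4 : Real.exp (-(c / 2 * A)) ≤ 1 := Real.exp_le_one_iff.2 (by simp; positivity)
  have h1' : A * Real.exp (-(c / 2 * A)) ≤ 2 / c := by
    refine h1.trans (le_of_eq (by field_simp))
  rw [abs_mul, abs_of_pos (Real.exp_pos _)]
  calc |g| * Real.exp (-ψ) ≤ D * (1 + A + A ^ 2) * Real.exp (-(c * A)) := by
        gcongr
    _ = D * ((Real.exp (-(c / 2 * A)) + A * Real.exp (-(c / 2 * A)) + A ^ 2 * Real.exp (-(c / 2 * A)))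
          * Real.exp (-(c / 2 * A))) := by rw [hs]; ring
    _ ≤ D * ((1 + 2 / c + 16 / c ^ 2) * Real.exp (-(c / 2 * A))) := by gcongr
    _ = _ := by ring

section
variable {X ι : Type*} [Fintype ι] [MeasurableSpace X] {μ : Measure X} (b : ι → ℝ)
  (a : ι → X → ℝ)

/-- weighted sums -/
def wS (k : ℕ) (t : ℝ) (x : X) : ℝ := ∑ i, b i ^ k * (Real.exp (b i * t) * a i x)

variable {b a}

lemma wS_meas (ha : ∀ i, Measurable (a i)) (k t) : Measurable (wS b a k t) := by
  unfold wS
  exact Finset.measurable_sum _ fun i _ => ((ha i).const_mul _).const_mul _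

lemma wS_deriv (k : ℕ) (t : ℝ) (x : X) :
    HasDerivAt (fun t => wS b a k t x) (wS b a (k+1) t x) t := by
  unfold wS
  apply HasDerivAt.fun_sum
  intro i _
  have := (((((hasDerivAt_id t).const_mul (b i)).exp).mul_const (a i x)).const_mul (b i ^ k))
  simp only [id] at this
  refine this.congr_deriv ?_
  ring

lemma wS_bounds (ha0 : ∀ i x, 0 ≤ a i x) (t0 : ℝ) : ∃ c D : ℝ, 0 < c ∧ 0 ≤ D ∧ ∀ t, |t| ≤ |t0| + 1 → ∀ x,
    c * ∑ i, a i x ≤ wS b a 0 t x ∧ |wS b a 1 t x| ≤ D * ∑ i, a i x ∧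
      |wS b a 2 t x| ≤ D * ∑ i, a i x := by
  set B := 1 + ∑ i, |b i| with hB
  have hB1 : 1 ≤ B := by rw [hB]; have := Finset.sum_nonneg (fun i (_ : i ∈ Finset.univ) => abs_nonneg (b i)); linarith
  have hb : ∀ i, |b i| ≤ B := by
    intro i
    have := Finset.single_le_sum (f := fun i => |b i|) (fun i _ => abs_nonneg (b i)) (Finset.mem_univ i)
    linarith
  have hbt : ∀ t, |t| ≤ |t0| + 1 → ∀ i, |b i * t| ≤ B * (|t0| + 1) := by
    intro t ht i; rw [abs_mul]; gcongr; exact hb i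
  have key : ∀ k, k ≤ 2 → ∀ t, |t| ≤ |t0| + 1 → ∀ x,
      |wS b a k t x| ≤ B ^ 2 * Real.exp (B * (|t0| + 1)) * ∑ i, a i x := by
    intro k hk t ht x
    unfold wS
    rw [Finset.mul_sum]
    refine (Finset.abs_sum_le_sum_abs _ _).trans (Finset.sum_le_sum fun i _ => ?_)
    rw [abs_mul, abs_mul, abs_of_pos (Real.exp_pos _), abs_of_nonneg (ha0 i x), abs_pow, ← mul_assoc]
    have h1 : |b i| ^ k ≤ B ^ 2 := (pow_le_pow_left₀ (abs_nonneg _) (hb i) k).trans (pow_le_pow_right₀ hB1 hk)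
    have h2 := le_of_abs_le (hbt t ht i)
    have := ha0 i x
    gcongr
  refine ⟨Real.exp (-(B * (|t0| + 1))), B ^ 2 * Real.exp (B * (|t0| + 1)), Real.exp_pos _, by positivity, ?_⟩
  intro t ht x
  refine ⟨?_, key 1 (by norm_num) t ht x, key 2 le_rfl t ht x⟩
  unfold wS
  rw [Finset.mul_sum]
  refine Finset.sum_le_sum fun i _ => ?_
  have h2 := neg_le_of_abs_le (hbt t ht i)
  have := ha0 i x
  rw [pow_zero, one_mul]
  gcongr

lemma wS_all (ha : ∀ i, Measurable (a i)) (ha0 : ∀ i x, 0 ≤ a i x)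
    (hint : ∀ c : ℝ, 0 < c → Integrable (fun x => Real.exp (-(c * ∑ i, a i x))) μ) (t : ℝ) :
    Integrable (fun x => Real.exp (-(wS b a 0 t x))) μ ∧
    Integrable (fun x => wS b a 1 t x * Real.exp (-(wS b a 0 t x))) μ ∧
    Integrable (fun x => wS b a 2 t x * Real.exp (-(wS b a 0 t x))) μ ∧
    Integrable (fun x => wS b a 1 t x ^ 2 * Real.exp (-(wS b a 0 t x))) μ ∧
    HasDerivAt (fun t => ∫ x, Real.exp (-(wS b a 0 t x)) ∂μ)
      (∫ x, -(wS b a 1 t x) * Real.exp (-(wS b a 0 t x)) ∂μ) t ∧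
    HasDerivAt (fun t => ∫ x, -(wS b a 1 t x) * Real.exp (-(wS b a 0 t x)) ∂μ)
      (∫ x, (wS b a 1 t x ^ 2 - wS b a 2 t x) * Real.exp (-(wS b a 0 t x)) ∂μ) t := by
  obtain ⟨c, D, hc, hD, hb⟩ := wS_bounds (b := b) ha0 t
  have hA : ∀ x, 0 ≤ ∑ i, a i x := fun x => Finset.sum_nonneg fun i _ => ha0 i x
  have hm := wS_meas (b := b) ha
  have he : ∀ t, Measurable (fun x => Real.exp (-(wS b a 0 t x))) := fun t => (hm 0 t).neg.exp
  have dom : ∀ D', 0 ≤ D' → Integrable (fun x => D' * (1 + 2 / c + 16 / c ^ 2) *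
      Real.exp (-(c / 2 * ∑ i, a i x))) μ := fun D' _ => (hint (c/2) (by positivity)).const_mul _
  set D' := 1 + D + D ^ 2 with hD'
  have hD'0 : 0 ≤ D' := by positivity
  have b1 : ∀ s, |s| ≤ |t| + 1 → ∀ x, |(1:ℝ)| ≤ D' * (1 + (∑ i, a i x) + (∑ i, a i x) ^ 2) := by
    intro s hs x
    have := hA x
    set y := ∑ i, a i x
    rw [abs_one, hD']
    have : 0 ≤ (1 + D + D^2) * (y + y^2) := by positivity
    nlinarith [sq_nonneg D]
  have b2 : ∀ s, |s| ≤ |t| + 1 → ∀ x, |-wS b a 1 s x| ≤ D' * (1 + (∑ i, a i x) + (∑ i, a i x) ^ 2) := by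
    intro s hs x
    rw [abs_neg]
    refine (hb s hs x).2.1.trans ?_
    have := hA x
    gcongr
    · rw [hD']; nlinarith
    · nlinarith
  have b3 : ∀ s, |s| ≤ |t| + 1 → ∀ x, |wS b a 2 s x| ≤ D' * (1 + (∑ i, a i x) + (∑ i, a i x) ^ 2) := by
    intro s hs x
    refine (hb s hs x).2.2.trans ?_
    have := hA x
    gcongr
    · rw [hD']; nlinarith
    · nlinarith
  have b4' : ∀ s, |s| ≤ |t| + 1 → ∀ x, |wS b a 1 s x ^ 2| ≤ D ^ 2 * (∑ i, a i x) ^ 2 := by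
    intro s hs x
    rw [abs_pow, ← mul_pow]
    exact pow_le_pow_left₀ (abs_nonneg _) (hb s hs x).2.1 2
  have b4 : ∀ s, |s| ≤ |t| + 1 → ∀ x, |wS b a 1 s x ^ 2| ≤ D' * (1 + (∑ i, a i x) + (∑ i, a i x) ^ 2) := by
    intro s hs x
    refine (b4' s hs x).trans ?_
    have := hA x
    gcongr
    · rw [hD']; nlinarith
    · linarith
  have b5 : ∀ s, |s| ≤ |t| + 1 → ∀ x, |wS b a 1 s x ^ 2 - wS b a 2 s x| ≤ D' * (1 + (∑ i, a i x) + (∑ i, a i x) ^ 2) := by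
    intro s hs x
    refine (abs_sub _ _).trans ((add_le_add (b4' s hs x) (hb s hs x).2.2).trans ?_)
    have := hA x
    set y := ∑ i, a i x
    rw [hD']
    have h1 : 0 ≤ (1 + D) * y ^ 2 := by positivity
    have h2 : 0 ≤ (1 + D ^ 2) * y := by positivity
    nlinarith [sq_nonneg D]
  have ht : |t| ≤ |t| + 1 := by linarith
  have gen : ∀ (g : X → ℝ), Measurable g → (∀ x, |g x| ≤ D' * (1 + (∑ i, a i x) + (∑ i, a i x) ^ 2)) →
      Integrable (fun x => g x * Real.exp (-(wS b a 0 t x))) μ := by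
    intro g hg hgb
    refine (dom D' hD'0).mono' (hg.mul (he t)).aestronglyMeasurable (Filter.Eventually.of_forall fun x => ?_)
    exact pt_dom hc (hA x) hD'0 (hb t ht x).1 (hgb x)
  have g0 : Integrable (fun x => Real.exp (-(wS b a 0 t x))) μ := by
    simpa using gen (fun _ => 1) measurable_const (b1 t ht)
  have hball : ∀ s ∈ Metric.ball t 1, |s| ≤ |t| + 1 := by
    intro s hs
    rw [Metric.mem_ball, Real.dist_eq] at hs
    have := abs_sub_abs_le_abs_sub s t
    linarith
  have g1 := gen _ (hm 1 t).neg (b2 t ht)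
  refine ⟨g0, ?_, gen _ (hm 2 t) (b3 t ht), gen _ ((hm 1 t).pow_const 2) (b4 t ht), ?_, ?_⟩
  · have := g1.neg
    refine this.congr (Filter.Eventually.of_forall fun x => ?_)
    simp
  · refine (hasDerivAt_integral_of_dominated_loc_of_deriv_le (Metric.ball_mem_nhds t one_pos)
      (Filter.Eventually.of_forall fun s => (he s).aestronglyMeasurable) g0
      (F' := fun s x => -wS b a 1 s x * Real.exp (-(wS b a 0 s x)))
      (((hm 1 t).neg.mul (he t)).aestronglyMeasurable)
      (Filter.Eventually.of_forall fun x s hs => ?_) (dom D' hD'0)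
      (Filter.Eventually.of_forall fun x s hs => ?_)).2
    · exact pt_dom hc (hA x) hD'0 (hb s (hball s hs) x).1 (b2 s (hball s hs) x)
    · exact ((wS_deriv 0 s x).neg.exp).congr_deriv (by simp [mul_comm])
  · refine (hasDerivAt_integral_of_dominated_loc_of_deriv_le (Metric.ball_mem_nhds t one_pos)
      (Filter.Eventually.of_forall fun s => ((hm 1 s).neg.mul (he s)).aestronglyMeasurable) g1
      (F' := fun s x => (wS b a 1 s x ^ 2 - wS b a 2 s x) * Real.exp (-(wS b a 0 s x)))
      ((((hm 1 t).pow_const 2).sub (hm 2 t)).mul (he t)).aestronglyMeasurable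
      (Filter.Eventually.of_forall fun x s hs => ?_) (dom D' hD'0)
      (Filter.Eventually.of_forall fun x s hs => ?_)).2
    · exact pt_dom hc (hA x) hD'0 (hb s (hball s hs) x).1 (b5 s (hball s hs) x)
    · exact ((wS_deriv 1 s x).neg.mul (wS_deriv 0 s x).neg.exp).congr_deriv (by simp; ring)

lemma log_conc [NeZero μ] (ha : ∀ i, Measurable (a i)) (ha0 : ∀ i x, 0 ≤ a i x)
    (hint : ∀ c : ℝ, 0 < c → Integrable (fun x => Real.exp (-(c * ∑ i, a i x))) μ)
    (hvar : ∀ t m, ∫ x, (wS b a 1 t x - m) * Real.exp (-(wS b a 0 t x)) ∂μ = 0 →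
      ∫ x, (wS b a 1 t x - m) ^ 2 * Real.exp (-(wS b a 0 t x)) ∂μ ≤
        ∫ x, wS b a 2 t x * Real.exp (-(wS b a 0 t x)) ∂μ) :
    ConcaveOn ℝ univ (fun t => Real.log (∫ x, Real.exp (-(wS b a 0 t x)) ∂μ)) := by
  have H := wS_all (b := b) ha ha0 hint
  set I := fun t => ∫ x, Real.exp (-(wS b a 0 t x)) ∂μ with hI
  set I1 := fun t => ∫ x, -(wS b a 1 t x) * Real.exp (-(wS b a 0 t x)) ∂μ with hI1
  set I2 := fun t => ∫ x, (wS b a 1 t x ^ 2 - wS b a 2 t x) * Real.exp (-(wS b a 0 t x)) ∂μ with hI2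
  have hpos : ∀ t, 0 < I t := fun t => integral_exp_pos (H t).1
  have hd : ∀ t, HasDerivAt I (I1 t) t := fun t => (H t).2.2.2.2.1
  have hd1 : ∀ t, HasDerivAt I1 (I2 t) t := fun t => (H t).2.2.2.2.2
  have hl : ∀ t, HasDerivAt (fun t => Real.log (I t)) (I1 t / I t) t := fun t => (hd t).log (hpos t).ne'
  have hq : ∀ t, HasDerivAt (fun t => I1 t / I t) ((I2 t * I t - I1 t * I1 t) / I t ^ 2) t :=
    fun t => (hd1 t).div (hd t) (hpos t).ne'
  have hkey : ∀ t, I2 t * I t - I1 t * I1 t ≤ 0 := by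
    intro t
    obtain ⟨i0, i1, i2, i11, -, -⟩ := H t
    set m := -(I1 t) / I t with hm
    have hmI : m * I t = - I1 t := by rw [hm]; field_simp [(hpos t).ne']
    set J1 := ∫ x, wS b a 1 t x * Real.exp (-(wS b a 0 t x)) ∂μ with hJ1
    set J11 := ∫ x, wS b a 1 t x ^ 2 * Real.exp (-(wS b a 0 t x)) ∂μ with hJ11
    set J2 := ∫ x, wS b a 2 t x * Real.exp (-(wS b a 0 t x)) ∂μ with hJ2
    have e1 : I1 t = - J1 := by
      rw [hI1, hJ1, ← integral_neg]; simp
    have e2 : I2 t = J11 - J2 := by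
      rw [hI2, hJ11, hJ2, ← integral_sub i11 i2]
      simp only [sub_mul]
    have z : ∫ x, (wS b a 1 t x - m) * Real.exp (-(wS b a 0 t x)) ∂μ = 0 := by
      simp only [sub_mul]
      rw [integral_sub i1 (i0.const_mul m), integral_const_mul]
      change J1 - m * I t = 0
      rw [hmI, e1]; ring
    have v := hvar t m z
    have e3 : ∫ x, (wS b a 1 t x - m) ^ 2 * Real.exp (-(wS b a 0 t x)) ∂μ = J11 - 2 * m * J1 + m ^ 2 * I t := by
      rw [hJ11, hJ1, hI, ← integral_const_mul, ← integral_const_mul,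
        ← integral_sub i11 (i1.const_mul _)]
      have hs : Integrable (fun x => wS b a 1 t x ^ 2 * Real.exp (-(wS b a 0 t x)) -
        2 * m * (wS b a 1 t x * Real.exp (-(wS b a 0 t x)))) μ := i11.sub (i1.const_mul _)
      rw [← integral_add hs (i0.const_mul _)]
      congr 1; ext x; ring
    rw [e3] at v
    change _ ≤ J2 at v
    have hJm : J1 = m * I t := by rw [hmI, e1]; ring
    rw [e2, e1]
    have := mul_le_mul_of_nonneg_right v (hpos t).le
    rw [hJm] at this ⊢
    nlinarith
  have hdf : deriv (fun t => Real.log (I t)) = fun t => I1 t / I t := funext fun t => (hl t).deriv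
  refine concaveOn_of_deriv2_nonpos' convex_univ (fun t _ => (hl t).differentiableAt.differentiableWithinAt)
    ?_ ?_
  · rw [hdf]; exact fun t _ => (hq t).differentiableAt.differentiableWithinAt
  · intro t _
    rw [Function.iterate_succ, Function.iterate_one, Function.comp, hdf, (hq t).deriv]
    exact div_nonpos_of_nonpos_of_nonneg (hkey t) (by positivity)
end


section
variable {n : ℕ} {ι : Type*} [Fintype ι]

/-- hermitian product -/
def LL (θ x : Fin n → ℂ) : ℂ := ∑ j, x j * (starRingEnd ℂ) (θ j)

lemma LL_cont (θ : Fin n → ℂ) : Continuous (LL θ) := by unfold LL; fun_prop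

lemma LL_smul (θ x : Fin n → ℂ) (c : ℂ) : LL θ (c • x) = c * LL θ x := by
  unfold LL; rw [Finset.mul_sum]; simp [mul_assoc]

lemma Wd_hol {f : (Fin n → ℂ) → ℂ} {x} (hf : DifferentiableAt ℂ f x) (k : Fin n) : Wd Complex.I k f x = 0 := by
  unfold Wd
  rw [hf.fderiv_restrictScalars ℝ]
  have : (Pi.single k Complex.I : Fin n → ℂ) = Complex.I • Pi.single k 1 := by
    rw [← Pi.single_smul]; simp
  rw [this]
  simp only [ContinuousLinearMap.coe_restrictScalars', map_smul, smul_eq_mul]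
  rw [← mul_assoc, Complex.I_mul_I]; ring

lemma gauss_C {c : ℝ} (hc : 0 < c) : Integrable (fun z : ℂ => Real.exp (-(c * ‖z‖^2))) := by
  have h := (GaussianFourier.integrable_cexp_neg_mul_sq_norm_add (b := (c : ℂ)) (V := ℂ) (by simpa using hc) 0 0).norm
  refine h.congr (Filter.Eventually.of_forall fun z => ?_)
  simp only [Complex.norm_exp]
  congr 1
  norm_cast
  simp

/-- coercive family -/
def Coer (θ : ι → Fin n → ℂ) : Prop := ∀ j, ∃ i, θ i = Pi.single j 1

lemma LL_single (j : Fin n) (x) : LL (Pi.single j 1) x = x j := by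
  unfold LL
  rw [Finset.sum_eq_single j]
  · simp
  · intro b _ hb; simp [Pi.single_eq_of_ne hb]
  · simp

variable {θ : ι → Fin n → ℂ}

lemma gauss_int (hθ : Coer θ) {r : ι → ℝ} (hr : ∀ i, 0 < r i) {c : ℝ} (hc : 0 < c) :
    Integrable (fun x => Real.exp (-(c * ∑ i, (‖LL (θ i) x‖ / r i) ^ 2))) := by
  choose σ hσ using hθ
  -- crude: the sum over i bounds each single term
  set R := ∑ i, (r i) ^ 2 + 1 with hR
  have hRp : 0 < R := by positivity
  set d : ℝ := c / ((n + 1) * R) with hd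
  have hdp : 0 < d := by positivity
  have hg : Integrable (fun x : Fin n → ℂ => ∏ j, Real.exp (-(d * ‖x j‖ ^ 2))) := by
    rw [volume_pi]
    exact Integrable.fintype_prod (f := fun _ z => Real.exp (-(d * ‖z‖ ^ 2))) fun _ => gauss_C hdp
  refine hg.mono' ?_ (Filter.Eventually.of_forall fun x => ?_)
  · have := fun i => (LL_cont (θ i))
    have : Continuous (fun x => Real.exp (-(c * ∑ i, (‖LL (θ i) x‖ / r i) ^ 2))) := by fun_prop
    exact this.aestronglyMeasurable
  · rw [Real.norm_eq_abs, abs_of_pos (Real.exp_pos _), ← Real.exp_sum, Real.exp_le_exp,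
      Finset.sum_neg_distrib, neg_le_neg_iff, ← Finset.mul_sum]
    set S := ∑ i, (‖LL (θ i) x‖ / r i) ^ 2 with hS
    have hS0 : 0 ≤ S := Finset.sum_nonneg fun i _ => sq_nonneg _
    have h1 : ∀ j, ‖x j‖ ^ 2 ≤ R * S := by
      intro j
      have h := Finset.single_le_sum (f := fun i => (‖LL (θ i) x‖ / r i) ^ 2) (fun i _ => sq_nonneg _)
        (Finset.mem_univ (σ j))
      have h2 := Finset.single_le_sum (f := fun i => (r i) ^ 2) (fun i _ => sq_nonneg _)
        (Finset.mem_univ (σ j))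
      simp only [hσ, LL_single] at h
      have hrp := hr (σ j)
      calc ‖x j‖ ^ 2 = r (σ j) ^ 2 * (‖x j‖ / r (σ j)) ^ 2 := by field_simp
        _ ≤ R * S := by
          gcongr
          rw [hR]; linarith
    have h2 : ∑ j, ‖x j‖ ^ 2 ≤ (n + 1) * (R * S) := by
      calc _ ≤ ∑ j : Fin n, R * S := Finset.sum_le_sum fun j _ => h1 j
        _ = n * (R * S) := by simp
        _ ≤ _ := by
          have : 0 ≤ R * S := by positivity
          linarith
    calc d * ∑ j, ‖x j‖ ^ 2 ≤ d * ((n + 1) * (R * S)) := by gcongr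
      _ = c * S := by rw [hd]; field_simp

lemma pow_lower {u : ℝ} (hu : 0 ≤ u) {p : ℕ} (hp : 1 ≤ p) : u ^ 2 - 1 ≤ u ^ (2 * p) := by
  rcases le_total u 1 with h | h
  · have : u ^ 2 ≤ 1 := pow_le_one₀ hu h
    have : 0 ≤ u ^ (2 * p) := by positivity
    linarith
  · have := pow_le_pow_right₀ h (show 2 ≤ 2 * p by omega)
    linarith

lemma exp_dom {r : ι → ℝ} (hr : ∀ i, 0 < r i) {c : ℝ} (hc : 0 < c) {p : ℕ} (hp : 1 ≤ p) (x : Fin n → ℂ) :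
    Real.exp (-(c * ∑ i, (‖LL (θ i) x‖ / r i) ^ (2 * p))) ≤
      Real.exp (c * Fintype.card ι) * Real.exp (-(c * ∑ i, (‖LL (θ i) x‖ / r i) ^ 2)) := by
  rw [← Real.exp_add, Real.exp_le_exp]
  have h : ∑ i, ((‖LL (θ i) x‖ / r i) ^ 2 - 1) ≤ ∑ i, (‖LL (θ i) x‖ / r i) ^ (2 * p) :=
    Finset.sum_le_sum fun i _ => pow_lower (div_nonneg (norm_nonneg _) (hr i).le) hp
  rw [Finset.sum_sub_distrib] at h
  simp at h
  nlinarith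

lemma pow_int (hθ : Coer θ) {r : ι → ℝ} (hr : ∀ i, 0 < r i) {c : ℝ} (hc : 0 < c) {p : ℕ} (hp : 1 ≤ p) :
    Integrable (fun x => Real.exp (-(c * ∑ i, (‖LL (θ i) x‖ / r i) ^ (2 * p)))) := by
  refine ((gauss_int hθ hr hc).const_mul (Real.exp (c * Fintype.card ι))).mono' ?_
    (Filter.Eventually.of_forall fun x => ?_)
  · have := fun i => (LL_cont (θ i))
    have : Continuous (fun x => Real.exp (-(c * ∑ i, (‖LL (θ i) x‖ / r i) ^ (2 * p)))) := by fun_prop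
    exact this.aestronglyMeasurable
  · rw [Real.norm_eq_abs, abs_of_pos (Real.exp_pos _)]
    exact exp_dom hr hc hp x

/-- the integral -/
def QQ (θ : ι → Fin n → ℂ) (p : ℕ) (r : ι → ℝ) : ℝ :=
  ∫ x, Real.exp (-(∑ i, (‖LL (θ i) x‖ / r i) ^ (2 * p)))

lemma QQ_conc (hθ : Coer θ) {r s : ι → ℝ} (hr : ∀ i, 0 < r i) (hs : ∀ i, 0 < s i) {p : ℕ} (hp : 1 ≤ p)
    {l : ℝ} (hl : l ∈ Icc (0:ℝ) 1) :
    QQ θ p r ^ (1 - l) * QQ θ p s ^ l ≤ QQ θ p (fun i => r i ^ (1 - l) * s i ^ l) := by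
  set b : ι → ℝ := fun i => 2 * p * Real.log (r i / s i) with hb
  set a : ι → (Fin n → ℂ) → ℝ := fun i x => (‖LL (θ i) x‖ / r i) ^ (2 * p) with ha
  have hac : ∀ i, Continuous (a i) := by
    intro i; have := LL_cont (θ i); rw [ha]; fun_prop
  have ha0 : ∀ i x, 0 ≤ a i x := fun i x => pow_nonneg (div_nonneg (norm_nonneg _) (hr i).le) _
  have hint : ∀ c : ℝ, 0 < c → Integrable (fun x => Real.exp (-(c * ∑ i, a i x))) :=
    fun c hc => pow_int hθ hr hc hp
  have H := wS_all (b := b) (fun i => (hac i).measurable) ha0 hint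
  have hconc := log_conc (μ := volume) (b := b) (fun i => (hac i).measurable) ha0 hint (by
    intro t m hm
    set F : ι → (Fin n → ℂ) → ℂ := fun i x => ((Real.exp (b i * t / 2) / r i ^ p : ℝ) : ℂ) * LL (θ i) x ^ p with hF
    have hFn : ∀ i x, ‖F i x‖ ^ 2 = Real.exp (b i * t) * a i x := by
      intro i x
      rw [hF]
      simp only [norm_mul, norm_pow, Complex.norm_real, Real.norm_eq_abs]
      rw [abs_of_pos (div_pos (Real.exp_pos _) (pow_pos (hr i) p)), ha]
      have : Real.exp (b i * t) = Real.exp (b i * t / 2) ^ 2 := by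
        rw [sq, ← Real.exp_add]; ring_nf
      rw [this]
      have := (hr i).ne'
      simp only [div_pow, mul_pow]
      rw [mul_comm 2 p, pow_mul, pow_mul]
      field_simp
    have hFd : ∀ i, Differentiable ℂ (F i) := by
      intro i; simp only [hF]; unfold LL; fun_prop
    have e0 : ∀ x, ∑ i, ‖F i x‖ ^ 2 = wS b a 0 t x := by
      intro x; simp [wS, hFn]
    have e1 : ∀ x, ∑ i, b i * ‖F i x‖ ^ 2 = wS b a 1 t x := by
      intro x; simp [wS, hFn]
    have e2 : ∀ x, ∑ i, b i ^ 2 * ‖F i x‖ ^ 2 = wS b a 2 t x := by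
      intro x; simp [wS, hFn]
    have V := variance_ineq (F := F) b (fun i => ?_) (fun i k x => Wd_hol (hFd i x) k)
      (fun i c x hc => ?_) m
    · simp only [e0, e1, e2] at V
      exact V (H t).1 (H t).2.2.1 (H t).2.2.2.1 (H t).2.1 hm
    · unfold Sm
      simp only [hF]; unfold LL
      have : ContDiff ℂ (⊤ : ℕ∞) (F i) := by simp only [hF]; unfold LL; fun_prop
      exact this.restrict_scalars ℝ
    · simp only [hF]; rw [LL_smul]; simp [hc])
  have hI : ∀ t, QQ θ p (fun i => r i ^ (1 - t) * s i ^ t) = ∫ x, Real.exp (-(wS b a 0 t x)) := by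
    intro t
    unfold QQ
    congr 1; ext x
    congr 2
    unfold wS
    refine Finset.sum_congr rfl fun i _ => ?_
    rw [pow_zero, one_mul, ha]
    have hri := hr i
    have hsi := hs i
    have : Real.exp (b i * t) = ((r i / s i) ^ t) ^ (2 * p) := by
      rw [Real.rpow_def_of_pos (div_pos hri hsi), ← Real.exp_nat_mul, hb]
      congr 1; push_cast; ring
    simp only
    rw [this, ← mul_pow]
    congr 1
    rw [Real.rpow_sub hri, Real.rpow_one, Real.div_rpow hri.le hsi.le]
    have h1 := (Real.rpow_pos_of_pos hri t).ne'
    have h2 := (Real.rpow_pos_of_pos hsi t).ne'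
    field_simp
  have hpos : ∀ t, 0 < ∫ x, Real.exp (-(wS b a 0 t x)) := fun t => integral_exp_pos (H t).1
  have h0 : QQ θ p r = ∫ x, Real.exp (-(wS b a 0 0 x)) := by rw [← hI]; simp
  have h1 : QQ θ p s = ∫ x, Real.exp (-(wS b a 0 1 x)) := by rw [← hI]; simp
  rw [h0, h1, hI]
  have hc := hconc.2 (mem_univ (0:ℝ)) (mem_univ (1:ℝ)) (sub_nonneg.2 hl.2) hl.1 (by ring)
  simp only [smul_eq_mul, mul_zero, mul_one, zero_add] at hc
  rw [Real.rpow_def_of_pos (hpos 0), Real.rpow_def_of_pos (hpos 1), ← Real.exp_add,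
    ← Real.exp_log (hpos l), Real.exp_le_exp]
  linarith
end


section
variable {n : ℕ} {ι : Type*} [Fintype ι] {θ : ι → Fin n → ℂ}

open Classical in
/-- limiting integrand -/
def gl (θ : ι → Fin n → ℂ) (r : ι → ℝ) (x : Fin n → ℂ) : ℝ :=
  if ∀ i, ‖LL (θ i) x‖ ≤ r i then Real.exp (-(∑ i, if ‖LL (θ i) x‖ = r i then 1 else 0)) else 0

lemma gl_nonneg (r : ι → ℝ) (x : Fin n → ℂ) : 0 ≤ gl θ r x := by
  unfold gl; split_ifs
  · exact (Real.exp_pos _).le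
  · exact le_rfl

lemma gl_lim {r : ι → ℝ} (hr : ∀ i, 0 < r i) (x : Fin n → ℂ) :
    Filter.Tendsto (fun p : ℕ => Real.exp (-(∑ i, (‖LL (θ i) x‖ / r i) ^ (2 * (p + 1)))))
      Filter.atTop (nhds (gl θ r x)) := by
  classical
  have hp : Filter.Tendsto (fun p : ℕ => 2 * (p + 1)) Filter.atTop Filter.atTop := by
    refine Filter.tendsto_atTop_mono (fun p => ?_) Filter.tendsto_id
    simp; omega
  have hu : ∀ i, 0 ≤ ‖LL (θ i) x‖ / r i := fun i => div_nonneg (norm_nonneg _) (hr i).le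
  unfold gl
  split_ifs with h
  · refine (Real.continuous_exp.tendsto _).comp (Filter.Tendsto.neg ?_)
    refine tendsto_finsetSum _ fun i _ => ?_
    split_ifs with hi
    · rw [hi, div_self (hr i).ne']; simp
    · exact (tendsto_pow_atTop_nhds_zero_of_lt_one (hu i)
        ((div_lt_one (hr i)).2 (lt_of_le_of_ne (h i) hi))).comp hp
  · push Not at h
    obtain ⟨i, hi⟩ := h
    refine Real.tendsto_exp_neg_atTop_nhds_zero.comp ?_
    refine Filter.tendsto_atTop_mono (fun p => ?_)
      ((tendsto_pow_atTop_atTop_of_one_lt ((one_lt_div (hr i)).2 hi)).comp hp)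
    exact Finset.single_le_sum (f := fun i => (‖LL (θ i) x‖ / r i) ^ (2 * (p + 1)))
      (fun i _ => pow_nonneg (hu i) _) (Finset.mem_univ i)

lemma P_closed (r : ι → ℝ) : IsClosed {x | ∀ i, ‖LL (θ i) x‖ ≤ r i} := by
  simp only [ofPred_forall]
  exact isClosed_iInter fun i => isClosed_le (LL_cont _).norm continuous_const

lemma P_open (r : ι → ℝ) : IsOpen {x | ∀ i, ‖LL (θ i) x‖ < r i} := by
  simp only [ofPred_forall]
  exact isOpen_iInter_of_finite fun i => isOpen_lt (LL_cont _).norm continuous_const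

lemma P_fin (hθ : Coer θ) {r : ι → ℝ} (hr : ∀ i, 0 < r i) : volume {x | ∀ i, ‖LL (θ i) x‖ ≤ r i} < ⊤ := by
  refine lt_of_le_of_lt (measure_mono ?_) (measure_closedBall_lt_top (x := (0 : Fin n → ℂ)) (r := ∑ i, r i))
  intro x hx
  rw [mem_closedBall_zero_iff, pi_norm_le_iff_of_nonneg (Finset.sum_nonneg fun i _ => (hr i).le)]
  intro j
  obtain ⟨i, hi⟩ := hθ j
  have h := hx i
  rw [hi, LL_single] at h
  exact h.trans (Finset.single_le_sum (f := r) (fun i _ => (hr i).le) (Finset.mem_univ i))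

lemma QQ_lim (hθ : Coer θ) {r : ι → ℝ} (hr : ∀ i, 0 < r i) :
    Filter.Tendsto (fun p : ℕ => QQ θ (p + 1) r) Filter.atTop (nhds (∫ x, gl θ r x)) := by
  unfold QQ
  have hd := ((gauss_int hθ hr one_pos).const_mul (Real.exp (1 * Fintype.card ι)))
  refine tendsto_integral_of_dominated_convergence _ (fun p => ?_) hd (fun p => ?_)
    (Filter.Eventually.of_forall fun x => gl_lim hr x)
  · have := pow_int hθ hr one_pos (p := p + 1) (by omega)
    simp only [one_mul] at this
    exact this.1
  · refine Filter.Eventually.of_forall fun x => ?_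
    rw [Real.norm_eq_abs, abs_of_pos (Real.exp_pos _)]
    simpa using exp_dom (θ := θ) hr one_pos (p := p + 1) (by omega) x

lemma gl_le (r : ι → ℝ) (x : Fin n → ℂ) : gl θ r x ≤ indicator {x | ∀ i, ‖LL (θ i) x‖ ≤ r i} (fun _ => (1:ℝ)) x := by
  classical
  unfold gl indicator
  simp only [mem_ofPred_eq]
  split_ifs
  · rw [Real.exp_le_one_iff]
    simp only [Left.neg_nonpos_iff]
    exact Finset.sum_nonneg fun i _ => by split_ifs <;> simp
  · exact le_rfl

lemma le_gl (r : ι → ℝ) (x : Fin n → ℂ) : indicator {x | ∀ i, ‖LL (θ i) x‖ < r i} (fun _ => (1:ℝ)) x ≤ gl θ r x := by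
  classical
  by_cases h : ∀ i, ‖LL (θ i) x‖ < r i
  · rw [indicator_of_mem (s := {x | ∀ i, ‖LL (θ i) x‖ < r i}) h]
    unfold gl
    rw [if_pos fun i => (h i).le, Finset.sum_eq_zero fun i _ => if_neg (h i).ne]
    simp
  · rw [indicator_of_notMem (s := {x | ∀ i, ‖LL (θ i) x‖ < r i}) h]; exact gl_nonneg r x

lemma ind_int (hθ : Coer θ) {r : ι → ℝ} (hr : ∀ i, 0 < r i) :
    Integrable (indicator {x | ∀ i, ‖LL (θ i) x‖ ≤ r i} (fun _ => (1:ℝ))) :=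
  (integrable_indicator_iff (P_closed r).measurableSet).2 (integrableOn_const (P_fin hθ hr).ne)

lemma gl_int (hθ : Coer θ) {r : ι → ℝ} (hr : ∀ i, 0 < r i) : Integrable (gl θ r) := by
  refine (ind_int hθ hr).mono' ?_ (Filter.Eventually.of_forall fun x => ?_)
  · refine aestronglyMeasurable_of_tendsto_ae Filter.atTop (f := fun (p : ℕ) x =>
      Real.exp (-(∑ i, (‖LL (θ i) x‖ / r i) ^ (2 * (p + 1))))) (fun p => ?_)
      (Filter.Eventually.of_forall fun x => gl_lim hr x)
    have := pow_int hθ hr one_pos (p := p + 1) (by omega)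
    simp only [one_mul] at this
    exact this.1
  · rw [Real.norm_eq_abs, abs_of_nonneg (gl_nonneg r x)]; exact gl_le r x

lemma gl_up (hθ : Coer θ) {r : ι → ℝ} (hr : ∀ i, 0 < r i) :
    ∫ x, gl θ r x ≤ (volume {x | ∀ i, ‖LL (θ i) x‖ ≤ r i}).toReal := by
  refine (integral_mono (gl_int hθ hr) (ind_int hθ hr) (gl_le r)).trans (le_of_eq ?_)
  rw [integral_indicator (P_closed r).measurableSet]
  simp [Measure.real]

lemma gl_low (hθ : Coer θ) {r : ι → ℝ} (hr : ∀ i, 0 < r i) :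
    (volume {x | ∀ i, ‖LL (θ i) x‖ < r i}).toReal ≤ ∫ x, gl θ r x := by
  have hf : volume {x | ∀ i, ‖LL (θ i) x‖ < r i} < ⊤ :=
    lt_of_le_of_lt (measure_mono fun x hx i => (hx i).le) (P_fin hθ hr)
  refine le_trans (le_of_eq ?_) (integral_mono ((integrable_indicator_iff (P_open r).measurableSet).2
    (integrableOn_const hf.ne)) (gl_int hθ hr) (le_gl r))
  rw [integral_indicator (P_open r).measurableSet]
  simp [Measure.real]

lemma poly_ineq (hθ : Coer θ) {r s : ι → ℝ} (hr : ∀ i, 0 < r i) (hs : ∀ i, 0 < s i)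
    {l : ℝ} (hl : l ∈ Icc (0:ℝ) 1) :
    volume {x | ∀ i, ‖LL (θ i) x‖ < r i} ^ (1 - l) * volume {x | ∀ i, ‖LL (θ i) x‖ < s i} ^ l ≤
      volume {x | ∀ i, ‖LL (θ i) x‖ ≤ r i ^ (1 - l) * s i ^ l} := by
  have hl1 : 0 ≤ 1 - l := sub_nonneg.2 hl.2
  set q : ι → ℝ := fun i => r i ^ (1 - l) * s i ^ l with hq
  have hqp : ∀ i, 0 < q i := fun i => mul_pos (Real.rpow_pos_of_pos (hr i) _) (Real.rpow_pos_of_pos (hs i) _)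
  have lim : (∫ x, gl θ r x) ^ (1 - l) * (∫ x, gl θ s x) ^ l ≤ ∫ x, gl θ q x :=
    le_of_tendsto_of_tendsto' (((QQ_lim hθ hr).rpow_const (Or.inr hl1)).mul
      ((QQ_lim hθ hs).rpow_const (Or.inr hl.1))) (QQ_lim hθ hqp) (fun p => QQ_conc hθ hr hs (by omega) hl)
  have hfr : volume {x | ∀ i, ‖LL (θ i) x‖ < r i} ≠ ⊤ :=
    (lt_of_le_of_lt (measure_mono fun x hx i => (hx i).le) (P_fin hθ hr)).ne
  have hfs : volume {x | ∀ i, ‖LL (θ i) x‖ < s i} ≠ ⊤ :=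
    (lt_of_le_of_lt (measure_mono fun x hx i => (hx i).le) (P_fin hθ hs)).ne
  rw [← ENNReal.toReal_le_toReal (ENNReal.mul_ne_top (ENNReal.rpow_ne_top_of_nonneg hl1 hfr)
    (ENNReal.rpow_ne_top_of_nonneg hl.1 hfs)) (P_fin hθ hqp).ne, ENNReal.toReal_mul,
    ← ENNReal.toReal_rpow, ← ENNReal.toReal_rpow]
  refine le_trans ?_ (lim.trans (gl_up hθ hqp))
  have h0 : ∀ r : ι → ℝ, 0 ≤ ∫ x, gl θ r x := fun r => integral_nonneg (gl_nonneg r)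
  exact mul_le_mul (Real.rpow_le_rpow ENNReal.toReal_nonneg (gl_low hθ hr) hl1)
    (Real.rpow_le_rpow ENNReal.toReal_nonneg (gl_low hθ hs) hl.1)
    (Real.rpow_nonneg ENNReal.toReal_nonneg _) (Real.rpow_nonneg (h0 r) _)
end

section
variable {n : ℕ}

lemma crinner_cont : Continuous (fun q : (Fin n → ℂ) × (Fin n → ℂ) => crinner q.2 q.1) := by
  unfold crinner; fun_prop

lemma csupp_cont {K : Set (Fin n → ℂ)} (hK : IsCxBody K) : Continuous (csuppFn K) := by
  unfold csuppFn
  exact hK.2.2.1.continuous_sSup (f := fun θ x => crinner x θ) crinner_cont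

lemma le_csupp {K : Set (Fin n → ℂ)} (hK : IsCxBody K) {x} (hx : x ∈ K) (θ) : ‖LL θ x‖ ≤ csuppFn K θ := by
  set w := LL θ x with hw
  set y : Fin n → ℂ := fun j => Complex.exp (((-w.arg : ℝ) : ℂ) * Complex.I) * x j with hy
  have hyK : y ∈ K := by
    rw [← hK.2.2.2.2 (-w.arg)]
    exact ⟨x, hx, rfl⟩
  have h1 : crinner y θ = ‖w‖ := by
    have e : (∑ j, y j * (starRingEnd ℂ) (θ j)) = (‖w‖ : ℂ) := by
      have : y = Complex.exp (((-w.arg : ℝ) : ℂ) * Complex.I) • x := rfl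
      change LL θ y = _
      rw [this, LL_smul, ← hw]
      nth_rewrite 2 [← Complex.norm_mul_exp_arg_mul_I w]
      rw [mul_left_comm, ← Complex.exp_add]
      push_cast
      simp
    unfold crinner; rw [e]; simp
  rw [← h1]
  refine le_csSup ?_ ⟨y, hyK, rfl⟩
  refine (hK.2.2.1.image ?_).bddAbove
  exact crinner_cont.comp (continuous_const.prodMk continuous_id)

lemma csupp_nonneg {K : Set (Fin n → ℂ)} (hK : IsCxBody K) (θ) : 0 ≤ csuppFn K θ := by
  obtain ⟨x, hx⟩ := hK.2.2.2.1
  exact (norm_nonneg _).trans (le_csupp hK (interior_subset hx) θ)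

/-- finite family of directions -/
def dirs (n N : ℕ) : Fin n ⊕ Fin N → Fin n → ℂ :=
  Sum.elim (fun j => Pi.single j 1) (fun k => TopologicalSpace.denseSeq (Fin n → ℂ) k)

lemma dirs_coer (N : ℕ) : Coer (dirs n N) := fun j => ⟨Sum.inl j, rfl⟩

/-- radius -/
def rad (K T : Set (Fin n → ℂ)) (l ε : ℝ) (θ : Fin n → ℂ) : ℝ :=
  (csuppFn K θ + ε) ^ (1 - l) * (csuppFn T θ + ε) ^ l

/-- outer approximations -/
def outer (K T : Set (Fin n → ℂ)) (l : ℝ) (N : ℕ) : Set (Fin n → ℂ) :=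
  {x | ∀ i, ‖LL (dirs n N i) x‖ ≤ rad K T l (1 / ((N : ℝ) + 1)) (dirs n N i)}

lemma outer_anti {K T : Set (Fin n → ℂ)} (hK : IsCxBody K) (hT : IsCxBody T) {l : ℝ} (hl : l ∈ Icc (0 : ℝ) 1) :
    Antitone (outer K T l) := by
  intro M N hMN x hx i
  have hl1 : 0 ≤ 1 - l := sub_nonneg.2 hl.2
  have hl0 := hl.1
  have hr : ∀ θ, rad K T l (1 / ((N : ℝ) + 1)) θ ≤ rad K T l (1 / ((M : ℝ) + 1)) θ := by
    intro θ
    have h1 := csupp_nonneg hK θ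
    have h2 := csupp_nonneg hT θ
    unfold rad
    have : (1 : ℝ) / ((N : ℝ) + 1) ≤ 1 / ((M : ℝ) + 1) := by gcongr
    gcongr
  rcases i with j | k
  · exact (hx (Sum.inl j)).trans (hr _)
  · exact (hx (Sum.inr (Fin.castLE hMN k))).trans (hr _)

lemma outer_sub {K T : Set (Fin n → ℂ)} (hK : IsCxBody K) (hT : IsCxBody T) {l : ℝ} (hl : l ∈ Icc (0 : ℝ) 1) :
    ⋂ N, outer K T l N ⊆ clogMean l K T := by
  intro x hx θ
  rw [mem_iInter] at hx
  have hl1 : 0 ≤ 1 - l := sub_nonneg.2 hl.2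
  have hkc := csupp_cont hK
  have htc := csupp_cont hT
  have hcl : IsClosed {θ : Fin n → ℂ | crinner x θ ≤ csuppFn K θ ^ (1 - l) * csuppFn T θ ^ l} := by
    refine isClosed_le (crinner_cont.comp (continuous_id.prodMk continuous_const)) ?_
    exact (hkc.rpow_const fun _ => Or.inr hl1).mul (htc.rpow_const fun _ => Or.inr hl.1)
  have hd := TopologicalSpace.denseRange_denseSeq (Fin n → ℂ)
  refine hd.induction_on (p := fun θ => crinner x θ ≤ csuppFn K θ ^ (1 - l) * csuppFn T θ ^ l) θ hcl ?_
  intro k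
  set η := TopologicalSpace.denseSeq (Fin n → ℂ) k with hη
  have hbd : ∀ N, k + 1 ≤ N → crinner x η ≤ rad K T l (1 / ((N : ℝ) + 1)) η := by
    intro N hN
    have h := hx N (Sum.inr ⟨k, by omega⟩)
    exact (Complex.re_le_norm _).trans h
  have hlim : Filter.Tendsto (fun N : ℕ => rad K T l (1 / ((N : ℝ) + 1)) η) Filter.atTop
      (nhds (csuppFn K η ^ (1 - l) * csuppFn T η ^ l)) := by
    unfold rad
    have h0 := tendsto_one_div_add_atTop_nhds_zero_nat (𝕜 := ℝ)
    have h1 := (h0.const_add (csuppFn K η)).rpow_const (p := 1 - l) (Or.inr hl1)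
    have h2 := (h0.const_add (csuppFn T η)).rpow_const (p := l) (Or.inr hl.1)
    simpa using h1.mul h2
  exact ge_of_tendsto hlim (Filter.eventually_atTop.2 ⟨k + 1, hbd⟩)
end

/-- The log-Brunn-Minkowski inequality for complex bodies. -/
theorem stmt_0 {n : ℕ} (K T : Set (Fin n → ℂ)) (hK : IsCxBody K) (hT : IsCxBody T)
    (l : ℝ) (hl : l ∈ Icc (0 : ℝ) 1) :
    volume K ^ (1 - l) * volume T ^ l ≤ volume (clogMean l K T) := by
  have hl1 : 0 ≤ 1 - l := sub_nonneg.2 hl.2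
  have hε : ∀ N : ℕ, (0:ℝ) < 1 / ((N : ℝ) + 1) := fun N => by positivity
  have hpK : ∀ (N : ℕ) θ, 0 < csuppFn K θ + 1 / ((N : ℝ) + 1) := fun N θ =>
    add_pos_of_nonneg_of_pos (csupp_nonneg hK θ) (hε N)
  have hpT : ∀ (N : ℕ) θ, 0 < csuppFn T θ + 1 / ((N : ℝ) + 1) := fun N θ =>
    add_pos_of_nonneg_of_pos (csupp_nonneg hT θ) (hε N)
  have key : ∀ N, volume K ^ (1 - l) * volume T ^ l ≤ volume (outer K T l N) := by
    intro N
    refine le_trans ?_ (poly_ineq (dirs_coer N) (fun i => hpK N (dirs n N i)) (fun i => hpT N (dirs n N i)) hl)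
    refine mul_le_mul' (ENNReal.rpow_le_rpow (measure_mono fun x hx i => ?_) hl1)
      (ENNReal.rpow_le_rpow (measure_mono fun x hx i => ?_) hl.1)
    · exact (le_csupp hK hx _).trans_lt (lt_add_of_pos_right _ (hε N))
    · exact (le_csupp hT hx _).trans_lt (lt_add_of_pos_right _ (hε N))
  refine le_trans ?_ (measure_mono (outer_sub hK hT hl))
  rw [(outer_anti hK hT hl).measure_iInter (fun N => (P_closed _).measurableSet.nullMeasurableSet)
    ⟨0, (P_fin (dirs_coer 0) fun i => mul_pos (Real.rpow_pos_of_pos (hpK 0 _) _)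
      (Real.rpow_pos_of_pos (hpT 0 _) _)).ne⟩]
  exact le_iInf key
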